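/- arXiv:1709.07264 — 2 statements merged into one kernel-verified Lean document; each statement's English description precedes it below -/
import Mathlib

section
/- Let κ_{n,i} = k_n^{−r} with r > 0 and ε_{n,i} = k_n^{−1}. Let D be a dense subset of (0,∞) and M a measure on (0,∞] with M({∞}) = 0, M((x,∞)) < ∞ for all x ∈ D, and max_{1≤i≤k_n} | ∫_0^1 h_{n,i}·1{h_{n,i} > e^x − 1} dλ − M((x,∞)) | → 0 for every x ∈ D. Then T_n converges in distribution under P_(n) to ξ1 and under Q_(n) to ξ2, where: (a) if r < 1 then ξ1 ≡ 0 and ξ2 ≡ 0; (b) if r = 1 then, for j ∈ {1,2}, ξ_j is infinitely divisible with Lévy–Khintchine triplet (γ_j, 0, η_j), where dη1/dM(x) = 1/(e^x − 1) and dη2/dM(x) = e^x/(e^x − 1) for x > 0, and γ1, γ2 satisfy 0 = γ1 − ∫_{(0,∞)}(1 − e^x + x/(1+x²)) dη1(x) and γ2 = γ1 + ∫_{(0,∞)}(e^x − 1)·x/(1+x²) dη1(x); (c) if r > 1 then ξ1 ≡ −1 and the law of ξ2 is e^{−1}·δ_{−1} + (1 − e^{−1})·δ_{+∞}. -/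
open MeasureTheory Filter Topology

noncomputable section

/-- Mixture `Q = (1-e)·P + e·μ`. -/
def Qmix {α : Type*} [MeasurableSpace α] (P μ : Measure α) (e : ℝ) : Measure α :=
  (ENNReal.ofReal (1 - e)) • P + (ENNReal.ofReal e) • μ

/-- The uniform distribution on `(0,1)`. -/
def unif : Measure ℝ := volume.restrict (Set.Ioo 0 1)

/-- The signal density `x ↦ κ⁻¹ h(x/κ) 1{x ≤ κ} + r(x)` of the nonparametric
p-value model. -/
def sigDens (h : ℕ → ℕ → ℝ → ℝ) (κ : ℕ → ℕ → ℝ) (r : ℕ → ℕ → ℝ → ℝ) (n i : ℕ)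
    (x : ℝ) : ℝ :=
  (1 / κ n i) * h n i (x / κ n i) * (if x ≤ κ n i then 1 else 0) + r n i x

/-- The signal distribution `μ_{n,i}` of the nonparametric p-value model. -/
def sigM (h : ℕ → ℕ → ℝ → ℝ) (κ : ℕ → ℕ → ℝ) (r : ℕ → ℕ → ℝ → ℝ) (n i : ℕ) :
    Measure ℝ :=
  unif.withDensity (fun x => ENNReal.ofReal (sigDens h κ r n i x))

/-- Product null measure (product of uniforms). -/
def PprodU (k : ℕ → ℕ) (n : ℕ) : Measure (Fin (k n) → ℝ) :=
  Measure.pi (fun _ => unif)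

/-- Product alternative measure `Q_(n)` of the nonparametric p-value model. -/
def QprodPV (h : ℕ → ℕ → ℝ → ℝ) (κ : ℕ → ℕ → ℝ) (r : ℕ → ℕ → ℝ → ℝ)
    (ε : ℕ → ℕ → ℝ) (k : ℕ → ℕ) (n : ℕ) : Measure (Fin (k n) → ℝ) :=
  Measure.pi (fun i => Qmix unif (sigM h κ r n i) (ε n i))

/-- Total variation distance `‖P − Q‖ = sup_A |P(A) − Q(A)|`. -/
def tvDist {β : Type*} [MeasurableSpace β] (P Q : Measure β) : ℝ :=
  ⨆ A : {s : Set β // MeasurableSet s}, |(P A.1).toReal - (Q A.1).toReal|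

/-- Extended likelihood ratio `dQ/dP` with values in `[0,∞]`. -/
def elr {α : Type*} [MeasurableSpace α] (Q P : Measure α) (a : α) : ENNReal :=
  Q.rnDeriv (P + Q) a / P.rnDeriv (P + Q) a

/-- Log-likelihood ratio statistic `T_n` of the nonparametric p-value model. -/
def TstatPV (h : ℕ → ℕ → ℝ → ℝ) (κ : ℕ → ℕ → ℝ) (r : ℕ → ℕ → ℝ → ℝ)
    (ε : ℕ → ℕ → ℝ) (k : ℕ → ℕ) (n : ℕ) (y : Fin (k n) → ℝ) : EReal :=
  ∑ i : Fin (k n), ENNReal.log (elr (Qmix unif (sigM h κ r n i) (ε n i)) unif (y i))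

/-- Law of `T_n` under the null. -/
def lawPV_P (h : ℕ → ℕ → ℝ → ℝ) (κ : ℕ → ℕ → ℝ) (r : ℕ → ℕ → ℝ → ℝ)
    (ε : ℕ → ℕ → ℝ) (k : ℕ → ℕ) (n : ℕ) : Measure EReal :=
  (PprodU k n).map (TstatPV h κ r ε k n)

/-- Law of `T_n` under the alternative. -/
def lawPV_Q (h : ℕ → ℕ → ℝ → ℝ) (κ : ℕ → ℕ → ℝ) (r : ℕ → ℕ → ℝ → ℝ)
    (ε : ℕ → ℕ → ℝ) (k : ℕ → ℕ) (n : ℕ) : Measure EReal :=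
  (QprodPV h κ r ε k n).map (TstatPV h κ r ε k n)

/-- Weak convergence of a sequence of measures (convergence in distribution). -/
def WeakLim {β : Type*} [MeasurableSpace β] [TopologicalSpace β]
    (μs : ℕ → Measure β) (ν : Measure β) : Prop :=
  ∀ f : BoundedContinuousFunction β ℝ,
    Tendsto (fun n => ∫ x, f x ∂(μs n)) atTop (nhds (∫ x, f x ∂ν))

end
noncomputable section

/-- A Lévy measure: a measure on `ℝ∖{0}` (mass zero at `0`) with `∫ min(x²,1) dη < ∞`. -/
def IsLevyMeasure (η : Measure ℝ) : Prop :=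
  η {0} = 0 ∧ (∫⁻ x, ENNReal.ofReal (min (x ^ 2) 1) ∂η) ≠ ⊤

/-- Lévy–Khintchine exponent of the triplet `(γ, σ², η)`. -/
def levyExponent (γ σsq : ℝ) (η : Measure ℝ) (t : ℝ) : ℂ :=
  Complex.I * (γ : ℂ) * (t : ℂ) - (σsq : ℂ) * (t : ℂ) ^ 2 / 2 +
    ∫ x : ℝ, (Complex.exp (Complex.I * (t : ℂ) * (x : ℂ)) - 1 -
      Complex.I * (t : ℂ) * (x : ℂ) / (1 + (x : ℂ) ^ 2)) ∂η

/-- `ν` is the (automatically infinitely divisible) probability measure on `ℝ` with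
Lévy–Khintchine triplet `(γ, σ², η)`: its characteristic function is given by the
Lévy–Khintchine formula. -/
def HasLevyTriplet (ν : Measure ℝ) (γ σsq : ℝ) (η : Measure ℝ) : Prop :=
  IsLevyMeasure η ∧
    ∀ t : ℝ, (∫ x : ℝ, Complex.exp (Complex.I * (t : ℂ) * (x : ℂ)) ∂ν) =
      Complex.exp (levyExponent γ σsq η t)

/-- The restriction of a measure on `[−∞,∞]` to its real part, as a measure on `ℝ`. -/
def erealRealPart (ν : Measure EReal) : Measure ℝ :=
  (ν.restrict {x : EReal | x ≠ ⊥ ∧ x ≠ ⊤}).map EReal.toReal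

end
noncomputable section

/-- The zero perturbation. -/
def rzero : ℕ → ℕ → ℝ → ℝ := fun _ _ _ => 0


lemma prod_one_add_tendsto (k : ℕ → ℕ) (hk : Tendsto k atTop atTop)
    (z : ∀ n, Fin (k n) → ℂ) (C : ℝ) (hC : ∀ n i, ‖z n i‖ ≤ C / k n) (L : ℂ)
    (hL : Tendsto (fun n => ∑ i, z n i) atTop (𝓝 L)) :
    Tendsto (fun n => ∏ i, (1 + z n i)) atTop (𝓝 (Complex.exp L)) := by
  have hkR : Tendsto (fun n => (k n : ℝ)) atTop atTop := tendsto_natCast_atTop_atTop.comp hk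
  have hC0 : Tendsto (fun n => C / (k n : ℝ)) atTop (𝓝 0) := hkR.const_div_atTop C
  have hsmall : ∀ᶠ n in atTop, C / (k n : ℝ) ≤ 1 / 2 :=
    hC0.eventually (eventually_le_nhds (by norm_num))
  have hlog : Tendsto (fun n => ∑ i, Complex.log (1 + z n i)) atTop (𝓝 L) := by
    have hd : Tendsto (fun n => ∑ i, Complex.log (1 + z n i) - ∑ i, z n i) atTop (𝓝 0) := by
      refine squeeze_zero_norm' (a := fun n => C * (C / (k n : ℝ))) ?_ (by simpa using hC0.const_mul C)
      filter_upwards [hsmall, hk.eventually_ge_atTop 1] with n hn hkn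
      rw [← Finset.sum_sub_distrib]
      have hk0 : (0 : ℝ) < k n := by exact_mod_cast hkn
      calc _ ≤ ∑ i, ‖Complex.log (1 + z n i) - z n i‖ := norm_sum_le _ _
        _ ≤ ∑ i : Fin (k n), (C / k n) ^ 2 := by
            refine Finset.sum_le_sum fun i _ => ?_
            have h1 := (hC n i).trans hn
            refine (Complex.norm_log_one_add_sub_self_le (by linarith)).trans ?_
            have h2 : (1 - ‖z n i‖)⁻¹ ≤ 2 := by
              rw [inv_le_comm₀ (by linarith) (by norm_num)]; linarith
            have h3 : ‖z n i‖ ^ 2 ≤ (C / k n) ^ 2 := by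
              gcongr; exact hC n i
            have := sq_nonneg ‖z n i‖
            nlinarith
        _ = C * (C / k n) := by
            simp; field_simp
    simpa using hd.add hL
  refine ((Complex.continuous_exp.tendsto L).comp hlog).congr' ?_
  filter_upwards [hsmall] with n hn
  simp only [Function.comp, Complex.exp_sum]
  refine Finset.prod_congr rfl fun i _ => Complex.exp_log ?_
  intro h0
  have h1 := (hC n i).trans hn
  have : z n i = -1 := by linear_combination h0
  rw [this] at h1; norm_num at h1

/-- scaling formula -/
lemma integral_qfun (c κ a : ℝ) (hκ : 0 < κ) (hκ1 : κ ≤ 1) (g : ℝ → ℝ) (W : ℝ → ℂ)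
    (hintg : IntegrableOn (fun x => W (c + a * (if x ≤ κ then g (x / κ) else 0))) (Set.Ioo 0 1)) :
    ∫ x in Set.Ioo (0 : ℝ) 1, W (c + a * (if x ≤ κ then g (x / κ) else 0)) =
      (1 - κ) * W c + κ * ∫ x in Set.Ioo (0 : ℝ) 1, W (c + a * g x) := by
  have hu : Set.Ioo (0 : ℝ) 1 =ᵐ[volume] Set.Ioc (0 : ℝ) 1 := Ioo_ae_eq_Ioc
  rw [setIntegral_congr_set hu, setIntegral_congr_set hu]
  rw [integrableOn_congr_set_ae hu] at hintg
  rw [← Set.Ioc_union_Ioc_eq_Ioc hκ.le hκ1] at hintg ⊢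
  rw [setIntegral_union (by simp) measurableSet_Ioc
    (hintg.mono_set Set.subset_union_left) (hintg.mono_set Set.subset_union_right)]
  have e1 : ∫ x in Set.Ioc κ 1, W (c + a * (if x ≤ κ then g (x / κ) else 0)) = (1 - κ) * W c := by
    rw [setIntegral_congr_fun (g := fun _ => W c) measurableSet_Ioc]
    · simp [Measure.real, sub_nonneg.2 hκ1]
    · intro x hx; simp [not_le.2 hx.1]
  have e2 : ∫ x in Set.Ioc 0 κ, W (c + a * (if x ≤ κ then g (x / κ) else 0)) =
      κ * ∫ x in Set.Ioc (0 : ℝ) 1, W (c + a * g x) := by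
    rw [setIntegral_congr_fun (g := fun x => W (c + a * g (x / κ))) measurableSet_Ioc]
    · rw [← intervalIntegral.integral_of_le hκ.le, ← intervalIntegral.integral_of_le zero_le_one]
      rw [intervalIntegral.integral_comp_div (fun x => W (c + a * g x)) hκ.ne']
      simp [hκ.ne']
    · intro x hx; simp [hx.2]
  rw [e1, e2, Set.Ioc_union_Ioc_eq_Ioc hκ.le hκ1]; ring

lemma exists_of_charFun (μ : ℕ → ProbabilityMeasure ℝ) (f : ℝ → ℂ) (hf : ContinuousAt f 0)
    (h : ∀ t, Tendsto (fun n ↦ charFun (μ n : Measure ℝ) t) atTop (𝓝 (f t))) :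
    ∃ ν : ProbabilityMeasure ℝ, (∀ t, charFun (ν : Measure ℝ) t = f t) ∧
      Tendsto μ atTop (𝓝 ν) := by
  have h_tight : IsTightMeasureSet (𝓧 := ℝ) (Set.range fun n => (μ n : Measure ℝ)) :=
    isTightMeasureSet_of_tendsto_charFun hf h
  have h_compact : IsCompact (closure (Set.range μ)) :=
    isCompact_closure_of_isTightMeasureSet (by convert! h_tight using 1; ext; simp)
  obtain ⟨ν, -, hν⟩ := h_compact.exists_mapClusterPt (f := atTop) (u := μ)
    (by simp only [le_principal_iff]; exact Filter.mem_map.2 (Eventually.of_forall fun n => subset_closure ⟨n, rfl⟩))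
  have hcf : ∀ t, charFun (ν : Measure ℝ) t = f t := by
    intro t
    have hU := mapClusterPt_iff_ultrafilter.1 hν
    obtain ⟨U, hU, hUν⟩ := hU
    rw [ProbabilityMeasure.tendsto_iff_forall_integral_rclike_tendsto ℂ] at hUν
    have h1 := hUν (BoundedContinuousFunction.innerProbChar t)
    refine tendsto_nhds_unique ?_ ((h t).mono_left hU)
    simpa [charFun_eq_integral_innerProbChar] using h1
  refine ⟨ν, hcf, ProbabilityMeasure.tendsto_of_tendsto_charFun fun t => ?_⟩
  rw [hcf]; exact h t

/-- tail convergence gives weak convergence -/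
lemma tendsto_of_tails (μ : ℕ → ProbabilityMeasure ℝ) (ν : ProbabilityMeasure ℝ) (D : Set ℝ)
    (hD : Dense D)
    (h : ∀ x ∈ D, Tendsto (fun n => μ n (Set.Ioi x)) atTop (𝓝 (ν (Set.Ioi x)))) :
    Tendsto μ atTop (𝓝 ν) := by
  refine (isPiSystem_Ioc_mem D D).tendsto_probabilityMeasure_of_tendsto_of_mem ?_ ?_ ?_
  · rintro s ⟨l, hl, u, hu, hlu, rfl⟩; exact measurableSet_Ioc
  · intro u hu x hx
    obtain ⟨l, r, hxlr, hlr⟩ := mem_nhds_iff_exists_Ioo_subset.1 (hu.mem_nhds hx)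
    obtain ⟨a, ha, ha1, ha2⟩ := hD.exists_between hxlr.1
    obtain ⟨b, hb, hb1, hb2⟩ := hD.exists_between hxlr.2
    refine ⟨Set.Ioc a b, ⟨a, ha, b, hb, by linarith, rfl⟩, Ioc_mem_nhds ha2 hb1, ?_⟩
    refine subset_trans ?_ hlr
    intro y hy
    exact ⟨by linarith [hy.1], by linarith [hy.2]⟩
  · rintro s ⟨a, ha, b, hb, hab, rfl⟩
    have key : ∀ m : ProbabilityMeasure ℝ, m (Set.Ioc a b) = m (Set.Ioi a) - m (Set.Ioi b) := by
      intro m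
      have : Set.Ioi a = Set.Ioc a b ∪ Set.Ioi b := (Set.Ioc_union_Ioi_eq_Ioi hab.le).symm
      have h2 : (m : Measure ℝ) (Set.Ioi a) = (m : Measure ℝ) (Set.Ioc a b) + (m : Measure ℝ) (Set.Ioi b) := by
        rw [this, measure_union (by simp) measurableSet_Ioi]
      rw [← ProbabilityMeasure.ennreal_coeFn_eq_coeFn_toMeasure, ← ProbabilityMeasure.ennreal_coeFn_eq_coeFn_toMeasure, ← ProbabilityMeasure.ennreal_coeFn_eq_coeFn_toMeasure] at h2
      have h3 : m (Set.Ioi a) = m (Set.Ioc a b) + m (Set.Ioi b) := by exact_mod_cast h2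
      rw [h3, add_tsub_cancel_right]
    simp only [key]
    exact (h a ha).sub (h b hb)


structure GoodW (W : ℝ → ℂ) (L : ℝ) (d : ℂ) : Prop where
  lip : ∀ s s' : ℝ, 1 / 2 ≤ s → 1 / 2 ≤ s' → ‖W s - W s'‖ ≤ L * |s - s'|
  one : W 1 = 0
  der : HasDerivAt W d 1
  meas : Measurable W
  nonneg : 0 ≤ L
  dle : ‖d‖ ≤ L

lemma hasDerivAt_E (t s : ℝ) (hs : s ≠ 0) :
    HasDerivAt (fun s : ℝ => Complex.exp (t * Real.log s * Complex.I))
      (Complex.exp (t * Real.log s * Complex.I) * (t * (s⁻¹ : ℝ) * Complex.I)) s := by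
  have h1 : HasDerivAt (fun s : ℝ => (Real.log s : ℂ)) ((s⁻¹ : ℝ) : ℂ) s :=
    (Real.hasDerivAt_log hs).ofReal_comp
  exact ((h1.const_mul (t : ℂ)).mul_const Complex.I).cexp

lemma norm_E (t s : ℝ) : ‖Complex.exp (t * Real.log s * Complex.I)‖ = 1 := by
  rw [← Complex.ofReal_mul, Complex.norm_exp_ofReal_mul_I]

lemma goodW1 (t : ℝ) :
    GoodW (fun s : ℝ => Complex.exp (t * Real.log s * Complex.I) - 1) (2 * |t|) (t * Complex.I) where
  lip := by
    intro s s' hs hs'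
    refine (convex_Ici (1/2 : ℝ)).norm_image_sub_le_of_norm_hasDerivWithin_le
      (f := fun s : ℝ => Complex.exp (t * Real.log s * Complex.I) - 1)
      (fun x hx => (HasDerivAt.sub_const (1 : ℂ) (hasDerivAt_E t x ?_)).hasDerivWithinAt) ?_ hs' hs
    · have : (1/2 : ℝ) ≤ x := hx
      linarith
    · intro x hx
      have hx : (1/2 : ℝ) ≤ x := hx
      rw [norm_mul, norm_E]
      simp only [norm_mul, Complex.norm_real, Complex.norm_I, Real.norm_eq_abs, one_mul, mul_one]
      rw [mul_comm]; gcongr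
      rw [abs_of_pos (by positivity), inv_le_comm₀ (by linarith) (by norm_num)]
      linarith
  one := by simp
  der := by simpa using (hasDerivAt_E t 1 one_ne_zero).sub_const (1 : ℂ)
  meas := by fun_prop
  nonneg := by positivity
  dle := by simp; linarith [abs_nonneg t]

lemma goodW2 (t : ℝ) :
    GoodW (fun s : ℝ => (s : ℂ) * (Complex.exp (t * Real.log s * Complex.I) - 1)) (2 + |t|)
      (t * Complex.I) where
  lip := by
    intro s s' hs hs'
    refine (convex_Ici (1/2 : ℝ)).norm_image_sub_le_of_norm_hasDerivWithin_le
      (f := fun s : ℝ => (s : ℂ) * (Complex.exp (t * Real.log s * Complex.I) - 1))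
      (fun x hx => (HasDerivAt.mul (hasDerivAt_id x).ofReal_comp
        (HasDerivAt.sub_const (1 : ℂ) (hasDerivAt_E t x ?_))).hasDerivWithinAt) ?_ hs' hs
    · have : (1/2 : ℝ) ≤ x := hx
      linarith
    · intro x hx
      have hx : (1/2 : ℝ) ≤ x := hx
      have hx0 : x ≠ 0 := by linarith
      have e : (x : ℂ) * (Complex.exp (t * Real.log x * Complex.I) * (t * (x⁻¹ : ℝ) * Complex.I))
        = Complex.exp (t * Real.log x * Complex.I) * (t * Complex.I) := by
        have : (x : ℂ) ≠ 0 := by exact_mod_cast hx0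
        push_cast; field_simp
      simp only [id, e]
      refine (norm_add_le _ _).trans ?_
      simp only [norm_mul, norm_E, Complex.norm_real, Complex.norm_I, Real.norm_eq_abs]
      gcongr
      · have := norm_sub_le (Complex.exp (t * Real.log x * Complex.I)) 1
        rw [norm_E] at this
        rw [norm_one] at this
        rw [abs_one, one_mul]
        linarith
      · simp
  one := by simp
  der := by
    have := (hasDerivAt_id (1:ℝ)).ofReal_comp.mul
      ((hasDerivAt_E t 1 one_ne_zero).sub_const (1 : ℂ))
    refine this.congr_deriv ?_
    simp
  meas := by fun_prop
  nonneg := by positivity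
  dle := by simp

lemma GoodW.norm_le {W : ℝ → ℂ} {L : ℝ} {d : ℂ} (hW : GoodW W L d) {s : ℝ} (hs : 1 / 2 ≤ s) :
    ‖W s‖ ≤ L * |s - 1| := by
  have := hW.lip s 1 hs (by norm_num)
  rwa [hW.one, sub_zero] at this

/-- density of `Q` -/
def qf (c κ a : ℝ) (g : ℝ → ℝ) (x : ℝ) : ℝ :=
  c + a * (if x ≤ κ then g (x / κ) else 0)

lemma measurable_qf (c κ a : ℝ) (g : ℝ → ℝ) (hg : Measurable g) : Measurable (qf c κ a g) := by
  unfold qf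
  refine measurable_const.add (measurable_const.mul ?_)
  exact Measurable.ite measurableSet_Iic (hg.comp (measurable_id.div_const κ)) measurable_const

lemma integrable_qf (c κ a : ℝ) (hκ : 0 < κ) (g : ℝ → ℝ)
    (hi : IntegrableOn g (Set.Ioo 0 1)) : IntegrableOn (qf c κ a g) (Set.Ioo 0 1) := by
  unfold qf
  refine Integrable.add (by simp) (Integrable.const_mul ?_ _)
  have h1 : (fun x => if x ≤ κ then g (x / κ) else 0) = (Set.Iic κ).indicator (fun x => g (x / κ)) := by
    ext x; simp [Set.indicator]
  rw [h1]
  refine (integrable_indicator_iff measurableSet_Iic).2 ?_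
  rw [IntegrableOn, Measure.restrict_restrict measurableSet_Iic]
  have h2 : IntegrableOn (fun x => g (x / κ)) (Set.Ioc 0 κ) := by
    rw [← intervalIntegrable_iff_integrableOn_Ioc_of_le hκ.le]
    have h3 : IntervalIntegrable g volume 0 1 := by
      rw [intervalIntegrable_iff_integrableOn_Ioo_of_le zero_le_one]; exact hi
    have := h3.comp_mul_right (c := κ⁻¹)
    simpa [div_eq_mul_inv] using this
  exact h2.mono_set fun x hx => ⟨hx.2.1, hx.1⟩

lemma integral_abs_qf (k : ℝ) (hk : 2 ≤ k) (κ : ℝ) (hκ : 0 < κ) (hκ1 : κ ≤ 1) (g : ℝ → ℝ)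
    (hg0 : ∀ x, 0 ≤ g x)
    (hi : IntegrableOn g (Set.Ioo 0 1)) (h1 : ∫ x in Set.Ioo (0:ℝ) 1, g x = 1) :
    ∫ x in Set.Ioo (0:ℝ) 1, qf (1 - k⁻¹) κ ((k * κ)⁻¹) g x = 1 ∧
    ∫ x in Set.Ioo (0:ℝ) 1, |qf (1 - k⁻¹) κ ((k * κ)⁻¹) g x - 1| ≤ 2 / k := by
  have hk0 : 0 < k := by linarith
  have A : ∀ c : ℝ, ∫ x in Set.Ioo (0:ℝ) 1, qf c κ ((k * κ)⁻¹) g x = c + k⁻¹ := by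
    intro c
    have := integral_qfun c κ ((k * κ)⁻¹) hκ hκ1 g (fun s => (s : ℂ))
      (integrable_qf c κ _ hκ g hi).ofReal
    have h2 : ∫ x in Set.Ioo (0:ℝ) 1, (c + (k * κ)⁻¹ * g x) = c + (k * κ)⁻¹ := by
      rw [integral_add (by simp) (hi.const_mul _), integral_const_mul, h1]; simp
    rw [integral_complex_ofReal, integral_complex_ofReal, h2] at this
    have h3 : ∫ x in Set.Ioo (0:ℝ) 1, qf c κ ((k * κ)⁻¹) g x = (1 - κ) * c + κ * (c + (k * κ)⁻¹) := by
      exact_mod_cast this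
    rw [h3]; field_simp; ring
  refine ⟨by rw [A]; ring, ?_⟩
  calc _ ≤ ∫ x in Set.Ioo (0:ℝ) 1, qf (k⁻¹) κ ((k * κ)⁻¹) g x := by
        refine integral_mono ((integrable_qf _ κ _ hκ g hi).sub (by simp)).abs (integrable_qf _ κ _ hκ g hi) ?_
        intro x
        simp only [qf]
        have : 0 ≤ (k * κ)⁻¹ * (if x ≤ κ then g (x / κ) else 0) := by
          split_ifs
          · have := hg0 (x / κ); positivity
          · simp
        have hki : 0 < k⁻¹ := by positivity
        rw [abs_le]; constructor <;> linarith
    _ = 2 / k := by rw [A]; field_simp; ring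

lemma half_le_qf (k : ℝ) (hk : 2 ≤ k) (κ : ℝ) (hκ : 0 < κ) (g : ℝ → ℝ)
    (hg0 : ∀ x, 0 ≤ g x) (x : ℝ) : 1 / 2 ≤ qf (1 - k⁻¹) κ ((k * κ)⁻¹) g x := by
  have hk0 : 0 < k := by linarith
  simp only [qf]
  have : 0 ≤ (k * κ)⁻¹ * (if x ≤ κ then g (x / κ) else 0) := by
    split_ifs
    · have := hg0 (x / κ); positivity
    · simp
  have hki : k⁻¹ ≤ 1 / 2 := by rw [inv_le_comm₀ (by linarith) (by norm_num)]; linarith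
  linarith

lemma GoodW.integrable {W : ℝ → ℂ} {L : ℝ} {d : ℂ} (hW : GoodW W L d) {f : ℝ → ℝ} {s : Set ℝ}
    (hs : volume s ≠ ⊤)
    (hf : Measurable f) (hfi : IntegrableOn f s) (hf2 : ∀ x, 1 / 2 ≤ f x) :
    IntegrableOn (fun x => W (f x)) s := by
  refine Integrable.mono' (((hfi.sub (integrableOn_const hs (C := (1:ℝ)))).abs).const_mul L)
    (hW.meas.comp hf).aestronglyMeasurable (ae_of_all _ fun x => ?_)
  exact hW.norm_le (hf2 x)

lemma GoodW.integral_bound {W : ℝ → ℂ} {L : ℝ} {d : ℂ} (hW : GoodW W L d)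
    (k : ℝ) (hk : 2 ≤ k) (κ : ℝ) (hκ : 0 < κ) (hκ1 : κ ≤ 1) (g : ℝ → ℝ)
    (hg0 : ∀ x, 0 ≤ g x)
    (hi : IntegrableOn g (Set.Ioo 0 1)) (h1 : ∫ x in Set.Ioo (0:ℝ) 1, g x = 1) :
    ‖∫ x in Set.Ioo (0:ℝ) 1, W (qf (1 - k⁻¹) κ ((k * κ)⁻¹) g x)‖ ≤ (2 * L) / k := by
  calc _ ≤ ∫ x in Set.Ioo (0:ℝ) 1, L * |qf (1 - k⁻¹) κ ((k * κ)⁻¹) g x - 1| := by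
        refine norm_integral_le_of_norm_le ?_ (ae_of_all _ fun x => hW.norm_le (half_le_qf k hk κ hκ g hg0 x))
        exact (((integrable_qf _ κ _ hκ g hi).sub (by simp)).abs).const_mul L
    _ ≤ L * (2 / k) := by
        rw [integral_const_mul]
        exact mul_le_mul_of_nonneg_left (integral_abs_qf k hk κ hκ hκ1 g hg0 hi h1).2 hW.nonneg
    _ = _ := by ring

/-- The single-coordinate expansion. -/
lemma GoodW.integral_expand {W : ℝ → ℂ} {L : ℝ} {d : ℂ} (hW : GoodW W L d)
    (k : ℝ) (hk : 2 ≤ k) (κ : ℝ) (hκ : 0 < κ) (hκ1 : κ ≤ 1) (g : ℝ → ℝ)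
    (hg : Measurable g) (hg0 : ∀ x, 0 ≤ g x)
    (hi : IntegrableOn g (Set.Ioo 0 1)) :
    ‖(∫ x in Set.Ioo (0:ℝ) 1, W (qf (1 - k⁻¹) κ ((k * κ)⁻¹) g x)) -
      ((1 - κ) * W (1 - k⁻¹) + κ * ∫ x in Set.Ioo (0:ℝ) 1, W (1 + (k * κ)⁻¹ * g x))‖ ≤ L * κ / k := by
  have hk0 : 0 < k := by linarith
  have hki : k⁻¹ ≤ 1 / 2 := by rw [inv_le_comm₀ (by linarith) (by norm_num)]; linarith
  have hgn : ∀ x, 0 ≤ (k * κ)⁻¹ * g x := fun x => by have := hg0 x; positivity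
  have I0 : volume (Set.Ioo (0:ℝ) 1) ≠ ⊤ := by simp
  have hq := hW.integrable I0 (measurable_qf (1 - k⁻¹) κ ((k * κ)⁻¹) g hg) (integrable_qf _ κ _ hκ g hi)
    (half_le_qf k hk κ hκ g hg0)
  have := integral_qfun (1 - k⁻¹) κ ((k * κ)⁻¹) hκ hκ1 g W hq
  simp only [qf]
  rw [this, add_sub_add_left_eq_sub, ← mul_sub, ← integral_sub, norm_mul]
  · have hb : ‖∫ x in Set.Ioo (0:ℝ) 1, (W (1 - k⁻¹ + (k * κ)⁻¹ * g x) - W (1 + (k * κ)⁻¹ * g x))‖ ≤ L * k⁻¹ := by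
      have := norm_setIntegral_le_of_norm_le_const (μ := volume) (s := Set.Ioo (0:ℝ) 1) (C := L * k⁻¹)
        (f := fun x => (W (1 - k⁻¹ + (k * κ)⁻¹ * g x) - W (1 + (k * κ)⁻¹ * g x))) (by simp) ?_
      · simpa using this
      · intro x hx
        refine (hW.lip _ _ (by linarith [hgn x]) (by linarith [hgn x])).trans (le_of_eq ?_)
        congr 1
        rw [show (1 - k⁻¹ + (k * κ)⁻¹ * g x - (1 + (k * κ)⁻¹ * g x)) = - k⁻¹ by ring, abs_neg, abs_of_pos (by positivity)]
    rw [Complex.norm_real, Real.norm_eq_abs, abs_of_pos hκ]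
    calc _ ≤ κ * (L * k⁻¹) := by gcongr
      _ = _ := by field_simp
  · refine hW.integrable I0 (by fun_prop) ((integrableOn_const I0).add (hi.const_mul _)) (fun x => by linarith [hgn x])
  · refine hW.integrable I0 (by fun_prop) ((integrableOn_const I0).add (hi.const_mul _)) (fun x => by linarith [hgn x])


/-- law of `log (1+g)` under `g dλ` -/
def Mi (g : ℝ → ℝ) : Measure ℝ :=
  ((volume.restrict (Set.Ioo (0:ℝ) 1)).withDensity (fun u => ENNReal.ofReal (g u))).map
    (fun u => Real.log (1 + g u))

def Mbar {k : ℕ} (g : Fin k → ℝ → ℝ) : Measure ℝ :=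
  (k : ENNReal)⁻¹ • ∑ i, Mi (g i)

structure GoodG (g : ℝ → ℝ) : Prop where
  meas : Measurable g
  nonneg : ∀ x, 0 ≤ g x
  int : IntegrableOn g (Set.Ioo 0 1)
  one : ∫ x in Set.Ioo (0:ℝ) 1, g x = 1

lemma Mi_univ (g : ℝ → ℝ) (hG : GoodG g) :
    IsProbabilityMeasure (Mi g) := by
  have hg := hG.meas
  have : IsProbabilityMeasure ((volume.restrict (Set.Ioo (0:ℝ) 1)).withDensity (fun u => ENNReal.ofReal (g u))) := by
    constructor
    rw [withDensity_apply _ MeasurableSet.univ, Measure.restrict_univ,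
      ← ofReal_integral_eq_lintegral_ofReal hG.int (ae_of_all _ hG.nonneg), hG.one]; simp
  exact Measure.isProbabilityMeasure_map (by fun_prop)

lemma Mi_real_Ioi (g : ℝ → ℝ) (hG : GoodG g) (x : ℝ) :
    (Mi g).real (Set.Ioi x) = ∫ u in Set.Ioo (0:ℝ) 1, g u * (if Real.exp x - 1 < g u then (1:ℝ) else 0) := by
  have hg := hG.meas
  have hg0 := hG.nonneg
  have hm : MeasurableSet {u | Real.exp x - 1 < g u} := measurableSet_lt measurable_const hg
  have hset : (fun u => Real.log (1 + g u)) ⁻¹' (Set.Ioi x) = {u | Real.exp x - 1 < g u} := by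
    ext u
    have := hg0 u
    simp only [Set.mem_preimage, Set.mem_Ioi, Set.mem_ofPred_eq]
    rw [Real.lt_log_iff_exp_lt (by linarith)]
    constructor <;> intro <;> linarith
  have hir : Integrable g ((volume.restrict (Set.Ioo (0:ℝ) 1)).restrict {u | Real.exp x - 1 < g u}) :=
    Integrable.restrict hG.int
  rw [Measure.real, Mi, Measure.map_apply (by fun_prop) measurableSet_Ioi, hset, withDensity_apply _ hm,
    ← ofReal_integral_eq_lintegral_ofReal hir (ae_of_all _ hg0), ENNReal.toReal_ofReal (integral_nonneg hg0),
    ← integral_indicator hm]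
  congr 1
  ext u
  simp [Set.indicator]

lemma integral_Mi (g : ℝ → ℝ) (hG : GoodG g)
    (F : ℝ → ℂ) (hF : Measurable F) :
    ∫ x, F x ∂(Mi g) = ∫ u in Set.Ioo (0:ℝ) 1, (g u : ℂ) * F (Real.log (1 + g u)) := by
  have hg := hG.meas
  rw [Mi, integral_map (by fun_prop) hF.aestronglyMeasurable]
  rw [integral_withDensity_eq_integral_toReal_smul (by fun_prop) (by simp)]
  congr 1
  ext u
  rw [ENNReal.toReal_ofReal (hG.nonneg u)]; simp

lemma Mbar_prob {k : ℕ} (hk : 2 ≤ k) (g : Fin k → ℝ → ℝ) (hG : ∀ i, GoodG (g i)) :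
    IsProbabilityMeasure (Mbar g) := by
  constructor
  have : ∀ i, Mi (g i) Set.univ = 1 := fun i => (Mi_univ (g i) (hG i)).measure_univ
  simp only [Mbar, Measure.smul_apply, Measure.finsetSum_apply, this]
  simp
  exact ENNReal.inv_mul_cancel (by simp; omega) (by simp)

def Mbp {k : ℕ} (hk : 2 ≤ k) (g : Fin k → ℝ → ℝ) (hG : ∀ i, GoodG (g i)) :
    ProbabilityMeasure ℝ := ⟨Mbar g, Mbar_prob hk g hG⟩

lemma Mbar_real_Ioi {k : ℕ} (g : Fin k → ℝ → ℝ) (hG : ∀ i, GoodG (g i)) (x : ℝ) :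
    (Mbar g).real (Set.Ioi x) =
    (k : ℝ)⁻¹ * ∑ i, ∫ u in Set.Ioo (0:ℝ) 1, g i u * (if Real.exp x - 1 < g i u then (1:ℝ) else 0) := by
  have := fun i => Mi_univ (g i) (hG i)
  have h2 := fun i => Mi_real_Ioi (g i) (hG i) x
  simp only [← h2]
  simp only [Mbar, Measure.real, Measure.smul_apply, Measure.finsetSum_apply]
  simp only [smul_eq_mul, ENNReal.toReal_mul]
  rw [ENNReal.toReal_sum (fun i _ => measure_ne_top _ _)]
  simp

lemma integral_Mbar {k : ℕ} (g : Fin k → ℝ → ℝ) (hG : ∀ i, GoodG (g i))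
    (F : ℝ → ℂ) (hF : Measurable F) (C : ℝ) (hC : ∀ x, ‖F x‖ ≤ C) :
    ∫ x, F x ∂(Mbar g) = (k : ℂ)⁻¹ * ∑ i, ∫ u in Set.Ioo (0:ℝ) 1, (g i u : ℂ) * F (Real.log (1 + g i u)) := by
  have := fun i => Mi_univ (g i) (hG i)
  have h2 := fun i => integral_Mi (g i) (hG i) F hF
  simp only [← h2]
  rw [Mbar, integral_smul_measure, integral_finsetSum_measure]
  · simp
  · intro i _
    exact Integrable.of_bound hF.aestronglyMeasurable C (ae_of_all _ hC)

lemma Mbar_lower {k : ℕ} (hk : 2 ≤ k) (g : Fin k → ℝ → ℝ) (hG : ∀ i, GoodG (g i))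
    (x : ℝ) (hx : 0 ≤ x) : 1 - (Real.exp x - 1) ≤ (Mbar g).real (Set.Ioi x) := by
  have hk0 : (0:ℝ) < k := by exact_mod_cast (by omega : 0 < k)
  rw [Mbar_real_Ioi g hG]
  have hex : 1 ≤ Real.exp x := Real.one_le_exp hx
  have : ∀ i, 1 - (Real.exp x - 1) ≤ ∫ u in Set.Ioo (0:ℝ) 1, g i u * (if Real.exp x - 1 < g i u then (1:ℝ) else 0) := by
    intro i
    have hgm := (hG i).meas
    have e : 1 - (Real.exp x - 1) = ∫ u in Set.Ioo (0:ℝ) 1, (g i u - (Real.exp x - 1)) := by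
      rw [integral_sub (hG i).int (by simp), (hG i).one]; simp
    rw [e]
    refine integral_mono ((hG i).int.sub (by simp)) ?_ ?_
    · refine Integrable.mono' (hG i).int ?_ (ae_of_all _ fun u => ?_)
      · refine (hgm.mul (Measurable.ite (measurableSet_lt measurable_const hgm) measurable_const measurable_const)).aestronglyMeasurable
      · have := (hG i).nonneg u
        split_ifs <;> simp [abs_of_nonneg this, this]
    · intro u
      dsimp only
      split_ifs <;> linarith
  calc _ = (k:ℝ)⁻¹ * ∑ i : Fin k, (1 - (Real.exp x - 1)) := by
        rw [Finset.sum_const]; simp; field_simp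
    _ ≤ _ := by gcongr with i; exact this i

lemma M_facts (k : ℕ → ℕ) (hk : ∀ n, 2 ≤ k n) (g : ∀ n, Fin (k n) → ℝ → ℝ)
    (hG : ∀ n i, GoodG (g n i)) (D : Set ℝ) (M : Measure ℝ)
    (hD : D ⊆ Set.Ioi 0) (hDdense : Set.Ioi (0 : ℝ) ⊆ closure D)
    (hM0 : M (Set.Iic 0) = 0)
    (hMfin : ∀ x ∈ D, M (Set.Ioi x) ≠ ⊤)
    (hconv : ∀ x ∈ D, Tendsto (fun n => (Mbar (g n)).real (Set.Ioi x)) atTop (𝓝 (M.real (Set.Ioi x)))) :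
    ∃ ν : ProbabilityMeasure ℝ, (ν : Measure ℝ) = M ∧
      Tendsto (fun n => Mbp (hk n) (g n) (hG n)) atTop (𝓝 ν) := by
  have hP := fun n => Mbar_prob (hk n) (g n) (hG n)
  have hex : ∀ b : ℝ, 0 < b → ∃ x ∈ D, 0 < x ∧ x < b := by
    intro b hb
    have h1 : b / 2 ∈ closure D := hDdense (by simp [hb])
    obtain ⟨x, hx, hxD⟩ := mem_closure_iff.1 h1 (Set.Ioo 0 b) isOpen_Ioo ⟨by linarith, by linarith⟩
    exact ⟨x, hxD, hx.1, hx.2⟩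
  have hbd : ∀ x ∈ D, 1 - (Real.exp x - 1) ≤ M.real (Set.Ioi x) ∧ M.real (Set.Ioi x) ≤ 1 := by
    intro x hx
    refine ⟨ge_of_tendsto' (hconv x hx) fun n => Mbar_lower (hk n) (g n) (hG n) x (le_of_lt (hD hx)), ?_⟩
    refine le_of_tendsto' (hconv x hx) fun n => measureReal_le_one
  obtain ⟨x, hxD, hx0, hxl⟩ : ∃ x : ℕ → ℝ, (∀ n, x n ∈ D) ∧ (∀ n, 0 < x n) ∧ ∀ n, x n < 1 / (n + 1 : ℝ) := by
    choose x hx using fun n : ℕ => hex (1 / (n + 1 : ℝ)) (by positivity)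
    exact ⟨x, fun n => (hx n).1, fun n => (hx n).2.1, fun n => (hx n).2.2⟩
  have hxlim : Tendsto x atTop (𝓝 0) :=
    squeeze_zero (fun n => (hx0 n).le) (fun n => (hxl n).le) tendsto_one_div_add_atTop_nhds_zero_nat
  have hU : M Set.univ = M (Set.Ioi 0) := by
    rw [← Set.Iic_union_Ioi (a := (0:ℝ))]
    refine le_antisymm ((measure_union_le _ _).trans (by rw [hM0, zero_add])) (measure_mono Set.subset_union_right)
  have hle : M (Set.Ioi 0) ≤ 1 := by
    have hS : Set.Ioi (0:ℝ) = ⋃ n : ℕ, Set.Ioi ((1:ℝ) / (n + 1)) := by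
      ext y; simp only [Set.mem_Ioi, Set.mem_iUnion]
      exact ⟨fun hy => exists_nat_one_div_lt hy, fun ⟨n, hn⟩ => lt_trans (by positivity) hn⟩
    have hmono : Monotone fun n : ℕ => Set.Ioi ((1:ℝ) / (n + 1)) := by
      intro a b hab
      refine Set.Ioi_subset_Ioi ?_
      exact one_div_le_one_div_of_le (by positivity) (by exact_mod_cast Nat.succ_le_succ hab)
    rw [hS, hmono.measure_iUnion]
    refine iSup_le fun n => ?_
    refine (measure_mono (Set.Ioi_subset_Ioi (hxl n).le)).trans ?_
    have := (hbd _ (hxD n)).2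
    rw [← ENNReal.ofReal_toReal (hMfin _ (hxD n))]
    exact ENNReal.ofReal_le_one.2 this
  have hge : 1 ≤ M.real (Set.Ioi 0) := by
    have h1 : Tendsto (fun n => 1 - (Real.exp (x n) - 1)) atTop (𝓝 1) := by
      have := (Real.continuous_exp.tendsto 0).comp hxlim
      simpa using (this.sub_const 1).const_sub 1
    refine le_of_tendsto' h1 fun n => (hbd _ (hxD n)).1.trans ?_
    exact measureReal_mono (Set.Ioi_subset_Ioi (hx0 n).le) (ne_top_of_le_ne_top ENNReal.one_ne_top hle)
  have hM : IsProbabilityMeasure M := by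
    constructor
    rw [hU]
    refine le_antisymm hle ?_
    rw [← ENNReal.ofReal_toReal (ne_top_of_le_ne_top ENNReal.one_ne_top hle)]
    exact ENNReal.one_le_ofReal.2 hge
  refine ⟨⟨M, hM⟩, rfl, tendsto_of_tails _ _ (D ∪ Set.Iio 0) ?_ ?_⟩
  · rw [dense_iff_closure_eq, closure_union, closure_Iio, Set.eq_univ_iff_forall]
    intro y
    rcases le_or_gt y 0 with hy | hy
    · right; exact hy
    · left; exact hDdense hy
  · intro y hy
    rw [← NNReal.tendsto_coe]
    rcases hy with hy | hy
    · exact hconv y hy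
    · have h1 : M.real (Set.Ioi y) = 1 := by
        refine le_antisymm measureReal_le_one ?_
        exact hge.trans (measureReal_mono (Set.Ioi_subset_Ioi (le_of_lt hy)))
      have h2 : ∀ n, (Mbar (g n)).real (Set.Ioi y) = 1 := by
        intro n
        refine le_antisymm measureReal_le_one ?_
        have := Mbar_lower (hk n) (g n) (hG n) 0 le_rfl
        simp only [Real.exp_zero, sub_self, sub_zero] at this
        exact this.trans (measureReal_mono (Set.Ioi_subset_Ioi (le_of_lt hy)))
      change Tendsto (fun n => (Mbar (g n)).real (Set.Ioi y)) atTop (𝓝 (M.real (Set.Ioi y)))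
      simp only [h1, h2]
      exact tendsto_const_nhds

/-- the test function -/
def Fa (W : ℝ → ℂ) (a x : ℝ) : ℂ := dslope W 1 (1 + a * (Real.exp (max x 0) - 1))

lemma GoodW.norm_dslope_le {W : ℝ → ℂ} {L : ℝ} {d : ℂ} (hW : GoodW W L d) {s : ℝ} (hs : 1 / 2 ≤ s) :
    ‖dslope W 1 s‖ ≤ L := by
  by_cases h : s = 1
  · subst h; rw [dslope_same, hW.der.deriv]; exact hW.dle
  · rw [dslope_of_ne _ h, slope_def_module, hW.one, sub_zero, norm_smul, norm_inv, Real.norm_eq_abs]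
    have h0 : 0 < |s - 1| := abs_pos.2 (sub_ne_zero.2 h)
    rw [inv_mul_le_iff₀ h0, mul_comm]
    exact hW.norm_le hs

lemma GoodW.continuousAt_dslope {W : ℝ → ℂ} {L : ℝ} {d : ℂ} (hW : GoodW W L d) {s : ℝ} (hs : 1 / 2 < s) :
    ContinuousAt (dslope W 1) s := by
  by_cases h : s = 1
  · subst h; exact continuousAt_dslope_same.2 hW.der.differentiableAt
  · rw [continuousAt_dslope_of_ne h]
    have : Tendsto (fun s' => L * |s' - s|) (𝓝 s) (𝓝 0) := by
      have : Continuous fun s' => L * |s' - s| := by fun_prop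
      simpa using this.tendsto s
    rw [ContinuousAt, tendsto_iff_norm_sub_tendsto_zero]
    refine squeeze_zero' (Eventually.of_forall fun _ => norm_nonneg _) ?_ this
    filter_upwards [lt_mem_nhds hs] with s' hs'
    exact hW.lip _ _ hs'.le hs.le

lemma one_le_arg {a x : ℝ} (ha : 0 ≤ a) : 1 ≤ 1 + a * (Real.exp (max x 0) - 1) := by
  have : 1 ≤ Real.exp (max x 0) := Real.one_le_exp (le_max_right _ _)
  have : 0 ≤ a * (Real.exp (max x 0) - 1) := mul_nonneg ha (by linarith)
  linarith

lemma GoodW.continuous_Fa {W : ℝ → ℂ} {L : ℝ} {d : ℂ} (hW : GoodW W L d) {a : ℝ} (ha : 0 ≤ a) :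
    Continuous (Fa W a) := by
  rw [continuous_iff_continuousAt]
  intro x
  refine ContinuousAt.comp (g := dslope W 1) (f := fun x => 1 + a * (Real.exp (max x 0) - 1)) (hW.continuousAt_dslope ?_) ?_
  · have := one_le_arg (x := x) ha; linarith
  · fun_prop

lemma GoodW.norm_Fa {W : ℝ → ℂ} {L : ℝ} {d : ℂ} (hW : GoodW W L d) {a : ℝ} (ha : 0 ≤ a) (x : ℝ) :
    ‖Fa W a x‖ ≤ L := hW.norm_dslope_le (by have := one_le_arg (x := x) ha; linarith)

lemma GoodW.sum_eq_Fa {W : ℝ → ℂ} {L : ℝ} {d : ℂ} (hW : GoodW W L d) {a : ℝ} (ha : 0 ≤ a)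
    {k : ℕ} (g : Fin k → ℝ → ℝ) (hG : ∀ i, GoodG (g i)) :
    (k : ℂ)⁻¹ * ∑ i, ∫ u in Set.Ioo (0:ℝ) 1, W (1 + a * g i u) = a * ∫ x, Fa W a x ∂(Mbar g) := by
  rw [integral_Mbar g hG _ (hW.continuous_Fa ha).measurable L (hW.norm_Fa ha), mul_left_comm, Finset.mul_sum (a := (a:ℂ))]
  congr 1
  refine Finset.sum_congr rfl fun i _ => ?_
  rw [← integral_const_mul]
  congr 1
  ext u
  have h0 := (hG i).nonneg u
  have h1 : Real.exp (max (Real.log (1 + g i u)) 0) - 1 = g i u := by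
    rw [max_eq_left (Real.log_nonneg (by linarith)), Real.exp_log (by linarith)]; ring
  have h2 := sub_smul_dslope W 1 (1 + a * g i u)
  rw [Fa, h1]
  rw [hW.one, sub_zero, add_sub_cancel_left, Complex.real_smul] at h2
  rw [← h2]; push_cast; ring


def Ssum (W : ℝ → ℂ) (k : ℕ) (κ : ℝ) (g : Fin k → ℝ → ℝ) : ℂ :=
  ∑ i, ∫ x in Set.Ioo (0:ℝ) 1, W (qf (1 - (k:ℝ)⁻¹) κ (((k:ℝ) * κ)⁻¹) (g i) x)

lemma GoodW.Ssum_sub {W : ℝ → ℂ} {L : ℝ} {d : ℂ} (hW : GoodW W L d)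
    (k : ℕ → ℕ) (hk : ∀ n, 2 ≤ k n) (hkt : Tendsto k atTop atTop) (g : ∀ n, Fin (k n) → ℝ → ℝ)
    (hG : ∀ n i, GoodG (g n i)) (κ : ℕ → ℝ) (hκ0 : ∀ n, 0 < κ n) (hκ1 : ∀ n, κ n ≤ 1)
    (hκ : Tendsto κ atTop (𝓝 0)) :
    Tendsto (fun n => Ssum W (k n) (κ n) (g n) - ∫ x, Fa W (((k n:ℝ) * κ n)⁻¹) x ∂(Mbar (g n))) atTop (𝓝 (-d)) := by
  have hkR : Tendsto (fun n => (k n : ℝ)) atTop atTop := tendsto_natCast_atTop_atTop.comp hkt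
  have h1 : Tendsto (fun n => -((1 - κ n : ℂ)) * dslope W 1 (1 - (k n : ℝ)⁻¹)) atTop (𝓝 (-d)) := by
    have e1 : Tendsto (fun n => dslope W 1 (1 - (k n : ℝ)⁻¹)) atTop (𝓝 d) := by
      have := (hW.continuousAt_dslope (s := 1) (by norm_num)).tendsto
      rw [dslope_same, hW.der.deriv] at this
      refine this.comp ?_
      simpa using (tendsto_inv_atTop_zero.comp hkR).const_sub 1
    have e2 : Tendsto (fun n => -((1 - κ n : ℂ))) atTop (𝓝 (-1)) := by
      have := ((Complex.continuous_ofReal.tendsto 0).comp hκ).const_sub 1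
      simpa using this.neg
    simpa using e2.mul e1
  have h2 : Tendsto (fun n => (Ssum W (k n) (κ n) (g n) - ∫ x, Fa W (((k n:ℝ) * κ n)⁻¹) x ∂(Mbar (g n))) -
      (-((1 - κ n : ℂ)) * dslope W 1 (1 - (k n : ℝ)⁻¹))) atTop (𝓝 0) := by
    refine squeeze_zero_norm (a := fun n => L * κ n) (fun n => ?_) (by simpa using hκ.const_mul L)
    have hk2 : (2:ℝ) ≤ k n := by exact_mod_cast hk n
    have hk0 : (0:ℝ) < k n := by linarith
    have hkc : (k n : ℂ) ≠ 0 := by exact_mod_cast hk0.ne'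
    have hκc : (κ n : ℂ) ≠ 0 := by exact_mod_cast (hκ0 n).ne'
    have ha : 0 ≤ ((k n:ℝ) * κ n)⁻¹ := by have := hκ0 n; positivity
    have e3 := hW.sum_eq_Fa ha (g n) (hG n)
    have e4 : ∫ x, Fa W (((k n:ℝ) * κ n)⁻¹) x ∂(Mbar (g n)) =
        κ n * ∑ i, ∫ u in Set.Ioo (0:ℝ) 1, W (1 + ((k n:ℝ) * κ n)⁻¹ * g n i u) := by
      generalize (∫ x, Fa W (((k n:ℝ) * κ n)⁻¹) x ∂(Mbar (g n))) = J at e3 ⊢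
      generalize (∑ i, ∫ u in Set.Ioo (0:ℝ) 1, W (1 + ((k n:ℝ) * κ n)⁻¹ * g n i u)) = S at e3 ⊢
      push_cast at e3
      rw [mul_inv, mul_assoc] at e3
      have e3' := mul_left_cancel₀ (inv_ne_zero hkc) e3
      rw [e3', ← mul_assoc, mul_inv_cancel₀ hκc, one_mul]
    have e5 := sub_smul_dslope W 1 (1 - (k n : ℝ)⁻¹)
    rw [hW.one, sub_zero, Complex.real_smul] at e5
    have e6 : -((1 - κ n : ℂ)) * dslope W 1 (1 - (k n : ℝ)⁻¹) = k n * ((1 - κ n) * W (1 - (k n : ℝ)⁻¹)) := by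
      rw [← e5]; push_cast; field_simp; ring
    rw [e6, e4, Ssum, Finset.mul_sum]
    have e7 : (k n : ℂ) * ((1 - κ n) * W (1 - (k n : ℝ)⁻¹)) = ∑ i : Fin (k n), ((1 - κ n) * W (1 - (k n : ℝ)⁻¹)) := by simp
    rw [e7, ← Finset.sum_sub_distrib, ← Finset.sum_sub_distrib]
    calc _ ≤ ∑ i : Fin (k n), L * κ n / k n := by
          refine norm_sum_le_of_le _ fun i _ => ?_
          refine le_trans (le_of_eq ?_) (hW.integral_expand (k n) hk2 (κ n) (hκ0 n) (hκ1 n) (g n i) (hG n i).meas (hG n i).nonneg (hG n i).int)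
          congr 1; ring
      _ = _ := by simp; field_simp
  simpa using h2.add h1

lemma GoodW.lim_b {W : ℝ → ℂ} {L : ℝ} {d : ℂ} (hW : GoodW W L d)
    (μ : ℕ → ProbabilityMeasure ℝ) (ν : ProbabilityMeasure ℝ) (h : Tendsto μ atTop (𝓝 ν)) :
    Tendsto (fun n => ∫ x, Fa W 1 x ∂(μ n : Measure ℝ)) atTop (𝓝 (∫ x, Fa W 1 x ∂(ν : Measure ℝ))) := by
  rw [ProbabilityMeasure.tendsto_iff_forall_integral_rclike_tendsto ℂ] at h
  exact h (BoundedContinuousFunction.ofNormedAddCommGroup (Fa W 1) (hW.continuous_Fa zero_le_one) L (hW.norm_Fa zero_le_one))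

lemma GoodW.lim_a {W : ℝ → ℂ} {L : ℝ} {d : ℂ} (hW : GoodW W L d) (a : ℕ → ℝ) (ha : ∀ n, 0 ≤ a n)
    (ha0 : Tendsto a atTop (𝓝 0))
    (μ : ℕ → ProbabilityMeasure ℝ) (ν : ProbabilityMeasure ℝ) (h : Tendsto μ atTop (𝓝 ν)) :
    Tendsto (fun n => ∫ x, Fa W (a n) x ∂(μ n : Measure ℝ)) atTop (𝓝 d) := by
  -- tightness through a single compact set
  have htight : ∀ ε > 0, ∃ K : ℝ, ∀ᶠ n in atTop, (μ n : Measure ℝ).real (Set.Ici K) ≤ ε := by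
    intro ε hε
    have h1 : Tendsto (fun K : ℝ => (ν : Measure ℝ) (Set.Ici K)) atTop (𝓝 0) := by
      have := tendsto_measure_iInter_atTop (μ := (ν : Measure ℝ)) (s := fun K : ℝ => Set.Ici K)
        (fun K => measurableSet_Ici.nullMeasurableSet) (fun a b hab => Set.Ici_subset_Ici.2 hab) ⟨0, measure_ne_top _ _⟩
      have he : (⋂ K : ℝ, Set.Ici K) = ∅ := by
        ext y; simp only [Set.mem_iInter, Set.mem_Ici, Set.mem_empty_iff_false, iff_false, not_forall, not_le]
        exact ⟨y + 1, by linarith⟩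
      rwa [he, measure_empty] at this
    obtain ⟨K, hK⟩ := (h1.eventually (gt_mem_nhds (ENNReal.ofReal_pos.2 hε))).exists
    refine ⟨K, ?_⟩
    have h2 := ProbabilityMeasure.limsup_measure_closed_le_of_tendsto h (isClosed_Ici (a := K))
    have h3 := eventually_lt_of_limsup_lt (lt_of_le_of_lt h2 hK)
    filter_upwards [h3] with n hn
    exact ENNReal.toReal_le_of_le_ofReal hε.le hn.le
  rw [Metric.tendsto_atTop']
  intro ε hε
  obtain ⟨K, hK⟩ := htight (ε / 4 / (2 * L + 1)) (by have := hW.nonneg; positivity)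
  have hc : ∀ᶠ y in 𝓝 (0:ℝ), ‖dslope W 1 (1 + y) - d‖ < ε / 4 := by
    have h1 := (hW.continuousAt_dslope (s := 1) (by norm_num)).tendsto
    rw [dslope_same, hW.der.deriv] at h1
    have h2 : Tendsto (fun y : ℝ => 1 + y) (𝓝 0) (𝓝 1) := by
      have : Continuous fun y : ℝ => 1 + y := by fun_prop
      simpa using this.tendsto 0
    have := (h1.comp h2).eventually (Metric.ball_mem_nhds d (by positivity : 0 < ε / 4))
    simpa [dist_eq_norm] using this
  obtain ⟨δ, hδ, hδ2⟩ := Metric.eventually_nhds_iff.1 hc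
  have hsm : ∀ᶠ n in atTop, a n * (Real.exp (max K 0) - 1) < δ := by
    have : Tendsto (fun n => a n * (Real.exp (max K 0) - 1)) atTop (𝓝 0) := by simpa using ha0.mul_const (Real.exp (max K 0) - 1)
    exact this.eventually (gt_mem_nhds hδ)
  obtain ⟨N, hN⟩ := eventually_atTop.1 (hK.and hsm)
  refine ⟨N, fun n hn => ?_⟩
  obtain ⟨hn1, hn2⟩ := hN n hn.le
  have hintg : Integrable (Fa W (a n)) (μ n : Measure ℝ) :=
    Integrable.of_bound (hW.continuous_Fa (ha n)).aestronglyMeasurable L (ae_of_all _ (hW.norm_Fa (ha n)))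
  have hd : d = ∫ x, d ∂(μ n : Measure ℝ) := by simp
  rw [dist_eq_norm]
  conv_lhs => rw [hd]
  rw [← integral_sub hintg (by simp)]
  have hpt : ∀ x, ‖Fa W (a n) x - d‖ ≤ ε / 4 + (Set.Ici K).indicator (fun _ => 2 * L) x := by
    intro x
    by_cases hx : K ≤ x
    · rw [Set.indicator_of_mem (by exact hx)]
      have := norm_sub_le (Fa W (a n) x) d
      have h1 := hW.norm_Fa (ha n) x
      have h2 := hW.dle
      linarith
    · rw [Set.indicator_of_notMem (by exact hx)]
      have hx1 : Real.exp (max x 0) ≤ Real.exp (max K 0) := by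
        apply Real.exp_le_exp.2; exact max_le_max_right _ (le_of_not_ge hx)
      have hx2 : 1 ≤ Real.exp (max x 0) := Real.one_le_exp (le_max_right _ _)
      have := hδ2 (y := a n * (Real.exp (max x 0) - 1)) (by
        rw [Real.dist_eq, sub_zero, abs_of_nonneg (mul_nonneg (ha n) (by linarith))]
        refine lt_of_le_of_lt ?_ hn2
        exact mul_le_mul_of_nonneg_left (by linarith) (ha n))
      simp only [add_zero]
      exact this.le
  have hL := hW.nonneg
  calc _ ≤ ∫ x, (ε / 4 + (Set.Ici K).indicator (fun _ => 2 * L) x) ∂(μ n : Measure ℝ) := by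
        refine norm_integral_le_of_norm_le ?_ (ae_of_all _ hpt)
        exact (integrable_const _).add ((integrable_const _).indicator measurableSet_Ici)
    _ = ε / 4 + (μ n : Measure ℝ).real (Set.Ici K) * (2 * L) := by
        rw [integral_add (integrable_const _) ((integrable_const _).indicator measurableSet_Ici), integral_indicator measurableSet_Ici]
        simp
    _ ≤ ε / 4 + ε / 4 / (2 * L + 1) * (2 * L) := by gcongr
    _ ≤ ε / 4 + ε / 4 := by
        gcongr
        rw [div_mul_eq_mul_div, div_le_iff₀ (by positivity)]
        nlinarith
    _ < ε := by linarith

lemma GoodW.lim_c {W : ℝ → ℂ} {L : ℝ} {d : ℂ} (hW : GoodW W L d) (B : ℝ) (hB : ∀ s, ‖W s‖ ≤ B)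
    (a : ℕ → ℝ) (ha : ∀ n, 0 < a n)
    (ha0 : Tendsto a atTop atTop) (k : ℕ → ℕ) (hk : ∀ n, 2 ≤ k n) (g : ∀ n, Fin (k n) → ℝ → ℝ)
    (hG : ∀ n i, GoodG (g n i)) :
    Tendsto (fun n => ∫ x, Fa W (a n) x ∂(Mbar (g n))) atTop (𝓝 0) := by
  refine squeeze_zero_norm (a := fun n => B / a n) (fun n => ?_) (ha0.const_div_atTop B)
  have e := hW.sum_eq_Fa (ha n).le (g n) (hG n)
  have hk0 : (0:ℝ) < k n := by exact_mod_cast (by have := hk n; omega : 0 < k n)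
  rw [le_div_iff₀ (ha n), mul_comm]
  have : a n * ‖∫ x, Fa W (a n) x ∂(Mbar (g n))‖ = ‖(a n : ℂ) * ∫ x, Fa W (a n) x ∂(Mbar (g n))‖ := by
    rw [norm_mul, Complex.norm_real, Real.norm_eq_abs, abs_of_pos (ha n)]
  rw [this, ← e, norm_mul]
  have hs : ‖∑ i, ∫ u in Set.Ioo (0:ℝ) 1, W (1 + a n * g n i u)‖ ≤ ∑ i : Fin (k n), B := by
    refine norm_sum_le_of_le _ fun i _ => ?_
    have := norm_setIntegral_le_of_norm_le_const (μ := volume) (s := Set.Ioo (0:ℝ) 1) (C := B)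
      (f := fun u => W (1 + a n * g n i u)) (by simp) (fun x _ => hB _)
    simpa using this
  calc _ ≤ ‖(k n : ℂ)⁻¹‖ * ∑ i : Fin (k n), B := by gcongr
    _ = B := by simp; field_simp


structure GoodQ (q : ℝ → ℝ) : Prop where
  meas : Measurable q
  pos : ∀ x, 0 < q x
  int : Integrable q unif
  one : ∫ x, q x ∂unif = 1

instance unif_prob : IsProbabilityMeasure unif := by
  constructor; simp [unif]

def qm (q : ℝ → ℝ) : Measure ℝ := unif.withDensity (fun x => ENNReal.ofReal (q x))

lemma GoodQ.prob {q : ℝ → ℝ} (h : GoodQ q) : IsProbabilityMeasure (qm q) := by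
  constructor
  rw [qm, withDensity_apply _ MeasurableSet.univ, Measure.restrict_univ,
    ← ofReal_integral_eq_lintegral_ofReal h.int (ae_of_all _ fun x => (h.pos x).le), h.one]
  simp

lemma qm_ac (q : ℝ → ℝ) : qm q ≪ unif := withDensity_absolutelyContinuous _ _

lemma GoodQ.elr_eq {q : ℝ → ℝ} (h : GoodQ q) :
    elr (qm q) unif =ᵐ[unif] fun x => ENNReal.ofReal (q x) := by
  have := h.prob
  have hPle : unif ≪ unif + qm q := Measure.AbsolutelyContinuous.rfl.add_right _
  have h1 := hPle.ae_le (Measure.rnDeriv_mul_rnDeriv (μ := qm q) (ν := unif) (κ := unif + qm q) (qm_ac q))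
  have h2 := Measure.rnDeriv_withDensity unif (f := fun x => ENNReal.ofReal (q x)) (h.meas.ennreal_ofReal)
  have h3 := Measure.rnDeriv_pos hPle
  have h4 := hPle.ae_le (Measure.rnDeriv_lt_top unif (unif + qm q))
  filter_upwards [h1, h2, h3, h4] with x e1 e2 e3 e4
  rw [elr, ← e1]
  have e2' : (qm q).rnDeriv unif x = ENNReal.ofReal (q x) := e2
  rw [Pi.mul_apply, e2', mul_comm]
  rw [mul_comm]
  exact ENNReal.mul_div_cancel_right e3.ne' e4.ne

def RT {k : ℕ} (q : Fin k → ℝ → ℝ) (y : Fin k → ℝ) : ℝ := ∑ i, Real.log (q i (y i))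

lemma measurable_RT {k : ℕ} (q : Fin k → ℝ → ℝ) (hq : ∀ i, GoodQ (q i)) : Measurable (RT q) := by
  unfold RT
  refine Finset.measurable_sum _ fun i _ => Real.measurable_log.comp ((hq i).meas.comp (measurable_pi_apply i))

lemma ereal_coe_sum {ι : Type*} (s : Finset ι) (f : ι → ℝ) :
    ((∑ i ∈ s, f i : ℝ) : EReal) = ∑ i ∈ s, ((f i : ℝ) : EReal) := by
  classical
  induction s using Finset.induction_on with
  | empty => simp
  | insert a s ha ih => rw [Finset.sum_insert ha, Finset.sum_insert ha, EReal.coe_add, ih]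

lemma sum_log_eq {k : ℕ} (q : Fin k → ℝ → ℝ) (hq : ∀ i, GoodQ (q i)) (ρ : Fin k → Measure ℝ)
    (hp : ∀ i, IsProbabilityMeasure (ρ i)) (hρ : ∀ i, ρ i ≪ unif) :
    (fun y : Fin k → ℝ => ∑ i, ENNReal.log (elr (qm (q i)) unif (y i))) =ᵐ[Measure.pi ρ]
      fun y => ((RT q y : ℝ) : EReal) := by
  have h1 : ∀ i, ∀ᵐ y ∂(Measure.pi ρ), elr (qm (q i)) unif (y i) = ENNReal.ofReal (q i (y i)) := fun i =>
    (Measure.quasiMeasurePreserving_eval ρ i).ae ((hρ i).ae_le (hq i).elr_eq)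
  filter_upwards [ae_all_iff.2 h1] with y hy
  rw [RT, ereal_coe_sum]
  refine Finset.sum_congr rfl fun i _ => ?_
  rw [hy i, ENNReal.log_ofReal_of_pos ((hq i).pos _)]

lemma pi_qm {k : ℕ} (q : Fin k → ℝ → ℝ) (hq : ∀ i, GoodQ (q i)) :
    Measure.pi (fun i => qm (q i)) =
      (Measure.pi (fun _ : Fin k => unif)).withDensity (fun y => ENNReal.ofReal (Real.exp (RT q y))) := by
  have := fun i => (hq i).prob
  refine (Measure.pi_eq (fun s hs => ?_))
  have hexp : ∀ y, Real.exp (RT q y) = ∏ i, q i (y i) := by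
    intro y
    rw [RT, Real.exp_sum]
    exact Finset.prod_congr rfl fun i _ => Real.exp_log ((hq i).pos _)
  rw [withDensity_apply _ (MeasurableSet.univ_pi hs)]
  simp_rw [hexp]
  rw [Measure.restrict_pi_pi]
  have hintg : ∀ i, Integrable (q i) (unif.restrict (s i)) := fun i => (hq i).int.restrict
  rw [← ofReal_integral_eq_lintegral_ofReal
    (Integrable.fintype_prod (f := fun i => q i) (μ := fun i => unif.restrict (s i)) (fun i => hintg i))
    (ae_of_all _ fun y => Finset.prod_nonneg fun i _ => ((hq i).pos _).le)]
  rw [integral_fintype_prod_eq_prod (f := fun i => q i) (μ := fun i => unif.restrict (s i)),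
    ENNReal.ofReal_prod_of_nonneg (fun i _ => integral_nonneg fun x => ((hq i).pos x).le)]
  refine Finset.prod_congr rfl fun i _ => ?_
  rw [qm, withDensity_apply _ (hs i), ofReal_integral_eq_lintegral_ofReal (hintg i) (ae_of_all _ fun x => ((hq i).pos x).le)]

def PR {k : ℕ} (q : Fin k → ℝ → ℝ) (hq : ∀ i, GoodQ (q i)) : ProbabilityMeasure ℝ :=
  ⟨(Measure.pi (fun _ : Fin k => unif)).map (RT q), Measure.isProbabilityMeasure_map (measurable_RT q hq).aemeasurable⟩

def QR {k : ℕ} (q : Fin k → ℝ → ℝ) (hq : ∀ i, GoodQ (q i)) : ProbabilityMeasure ℝ :=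
  ⟨(Measure.pi (fun i : Fin k => qm (q i))).map (RT q), by
    have := fun i => (hq i).prob
    exact Measure.isProbabilityMeasure_map (measurable_RT q hq).aemeasurable⟩

lemma QR_eq {k : ℕ} (q : Fin k → ℝ → ℝ) (hq : ∀ i, GoodQ (q i)) :
    (QR q hq : Measure ℝ) = (PR q hq : Measure ℝ).withDensity (fun x => ENNReal.ofReal (Real.exp x)) := by
  change (Measure.pi (fun i : Fin k => qm (q i))).map (RT q) = ((Measure.pi (fun _ : Fin k => unif)).map (RT q)).withDensity _
  have hm := measurable_RT q hq
  ext s hs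
  rw [Measure.map_apply hm hs, pi_qm q hq, withDensity_apply _ (hm hs), withDensity_apply _ hs,
    setLIntegral_map hs (by fun_prop) hm]

lemma exp_RT {k : ℕ} (q : Fin k → ℝ → ℝ) (t : ℝ) (y : Fin k → ℝ) :
    Complex.exp (t * (RT q y : ℝ) * Complex.I) = ∏ i, Complex.exp (t * Real.log (q i (y i)) * Complex.I) := by
  rw [← Complex.exp_sum, RT]; push_cast; rw [Finset.mul_sum, Finset.sum_mul]

lemma measE {q : ℝ → ℝ} (hq : GoodQ q) (t : ℝ) : Measurable (fun x => Complex.exp (t * Real.log (q x) * Complex.I)) := by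
  have := Real.measurable_log.comp hq.meas
  have h2 : Measurable fun x => Real.log (q x) := this
  fun_prop

lemma normE' (t s : ℝ) : ‖Complex.exp (t * s * Complex.I)‖ = 1 := by
  rw [← Complex.ofReal_mul]; exact Complex.norm_exp_ofReal_mul_I _

lemma charFun_PR {k : ℕ} (q : Fin k → ℝ → ℝ) (hq : ∀ i, GoodQ (q i)) (t : ℝ) :
    charFun (PR q hq : Measure ℝ) t =
      ∏ i, (1 + ∫ x in Set.Ioo (0:ℝ) 1, (fun s : ℝ => Complex.exp (t * Real.log s * Complex.I) - 1) (q i x)) := by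
  rw [charFun_apply_real]
  change ∫ x, _ ∂((Measure.pi (fun _ : Fin k => unif)).map (RT q)) = _
  rw [integral_map (measurable_RT q hq).aemeasurable (by fun_prop)]
  simp_rw [exp_RT]
  rw [integral_fintype_prod_eq_prod (f := fun i x => Complex.exp (t * Real.log (q i x) * Complex.I))
    (μ := fun _ => unif)]
  refine Finset.prod_congr rfl fun i _ => ?_
  change _ = 1 + ∫ x, (Complex.exp (t * Real.log (q i x) * Complex.I) - 1) ∂unif
  rw [integral_sub (Integrable.of_bound (measE (hq i) t).aestronglyMeasurable 1 (ae_of_all _ fun x => (normE' _ _).le)) (by simp)]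
  simp

lemma charFun_QR {k : ℕ} (q : Fin k → ℝ → ℝ) (hq : ∀ i, GoodQ (q i)) (t : ℝ) :
    charFun (QR q hq : Measure ℝ) t =
      ∏ i, (1 + ∫ x in Set.Ioo (0:ℝ) 1, (fun s : ℝ => (s : ℂ) * (Complex.exp (t * Real.log s * Complex.I) - 1)) (q i x)) := by
  have := fun i => (hq i).prob
  rw [charFun_apply_real]
  change ∫ x, _ ∂((Measure.pi (fun i : Fin k => qm (q i))).map (RT q)) = _
  rw [integral_map (measurable_RT q hq).aemeasurable (by fun_prop)]
  simp_rw [exp_RT]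
  rw [integral_fintype_prod_eq_prod (f := fun i x => Complex.exp (t * Real.log (q i x) * Complex.I))
    (μ := fun i => qm (q i))]
  refine Finset.prod_congr rfl fun i _ => ?_
  change _ = 1 + ∫ x, ((q i x : ℂ) * (Complex.exp (t * Real.log (q i x) * Complex.I) - 1)) ∂unif
  have hi : Integrable (fun x => (q i x : ℂ)) unif := (hq i).int.ofReal
  have hi2 : Integrable (fun x => (q i x : ℂ) * Complex.exp (t * Real.log (q i x) * Complex.I)) unif :=
    hi.mul_bdd (c := 1) (measE (hq i) t).aestronglyMeasurable (ae_of_all _ fun x => (normE' _ _).le)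
  simp_rw [mul_sub, mul_one]
  rw [integral_sub hi2 hi, integral_complex_ofReal, (hq i).one, qm,
    integral_withDensity_eq_integral_toReal_smul ((hq i).meas.ennreal_ofReal) (by simp)]
  simp only [ENNReal.toReal_ofReal ((hq i).pos _).le, Complex.real_smul]
  simp

/-- The mixture has the explicit density. -/
lemma Qmix_eq (k : ℕ) (hk : 2 ≤ k) (h : ℕ → ℕ → ℝ → ℝ) (κ : ℕ → ℕ → ℝ) (ε : ℕ → ℕ → ℝ) (n i : ℕ)
    (κ0 : ℝ) (hκ : κ n i = κ0) (h0 : 0 < κ0) (hε : ε n i = (k:ℝ)⁻¹)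
    (g : ℝ → ℝ) (hG : GoodG g) (hg : ∀ᵐ x, x ∈ Set.Ioo (0:ℝ) 1 → h n i x = g x) :
    Qmix unif (sigM h κ rzero n i) (ε n i) = qm (qf (1 - (k:ℝ)⁻¹) κ0 (((k:ℝ) * κ0)⁻¹) g) := by
  have hk2 : (2:ℝ) ≤ k := by exact_mod_cast hk
  have hkinv : (k:ℝ)⁻¹ ≤ 1 := inv_le_one_of_one_le₀ (by linarith)
  have hk0 : 0 < (k:ℝ)⁻¹ := by positivity
  -- replace h by g
  have e1 : sigM h κ rzero n i = unif.withDensity (fun x => ENNReal.ofReal (κ0⁻¹ * (if x ≤ κ0 then g (x / κ0) else 0))) := by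
    refine withDensity_congr_ae ?_
    have hqmp : Measure.QuasiMeasurePreserving (fun x : ℝ => κ0⁻¹ * x) volume volume := by
      refine ⟨by fun_prop, ?_⟩
      rw [Real.map_volume_mul_left (inv_ne_zero h0.ne')]
      exact Measure.smul_absolutelyContinuous
    have h1 := hqmp.ae hg
    have h2 : ∀ᵐ x : ℝ, x ≠ κ0 := by simp [ae_iff]
    rw [unif, Filter.EventuallyEq, ae_restrict_iff' measurableSet_Ioo]
    filter_upwards [h1, h2] with x hx hx2 hxm
    simp only [sigDens, rzero, hκ, add_zero]
    congr 1
    split_ifs with hle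
    · have hlt : x < κ0 := lt_of_le_of_ne hle hx2
      have := hx ⟨by have := hxm.1; positivity, by
        rw [inv_mul_lt_iff₀ h0]; simpa using hlt⟩
      rw [div_eq_inv_mul x κ0, this]; simp
    · simp
  have hgm : Measurable (fun x => ENNReal.ofReal (κ0⁻¹ * (if x ≤ κ0 then g (x / κ0) else 0))) := by
    refine Measurable.ennreal_ofReal (measurable_const.mul ?_)
    exact Measurable.ite measurableSet_Iic (hG.meas.comp (measurable_id.div_const κ0)) measurable_const
  rw [Qmix, e1, hε, ← withDensity_const, ← withDensity_smul _ hgm, ← withDensity_add_left measurable_const, qm]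
  congr 1
  ext x
  simp only [Pi.add_apply, Pi.smul_apply, smul_eq_mul, qf]
  have hnn : 0 ≤ (if x ≤ κ0 then g (x / κ0) else 0) := by
    split_ifs
    · exact hG.nonneg _
    · exact le_rfl
  rw [← ENNReal.ofReal_mul hk0.le, ← ENNReal.ofReal_add (by linarith) (by positivity)]
  congr 1
  rw [mul_inv]; ring

lemma GoodG.goodQ {g : ℝ → ℝ} (hG : GoodG g) (k : ℕ) (hk : 2 ≤ k) (κ0 : ℝ) (h0 : 0 < κ0) (h1 : κ0 ≤ 1) :
    GoodQ (qf (1 - (k:ℝ)⁻¹) κ0 (((k:ℝ) * κ0)⁻¹) g) := by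
  have hk2 : (2:ℝ) ≤ k := by exact_mod_cast hk
  exact ⟨measurable_qf _ _ _ _ hG.meas, fun x => lt_of_lt_of_le (by norm_num) (half_le_qf _ hk2 _ h0 _ hG.nonneg x),
    integrable_qf _ _ _ h0 _ hG.int, (integral_abs_qf _ hk2 _ h0 h1 _ hG.nonneg hG.int hG.one).1⟩

lemma weakLim_P (h : ℕ → ℕ → ℝ → ℝ) (κ : ℕ → ℕ → ℝ) (ε : ℕ → ℕ → ℝ) (k : ℕ → ℕ)
    (q : ∀ n, Fin (k n) → ℝ → ℝ) (hq : ∀ n i, GoodQ (q n i))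
    (hQ : ∀ n (i : Fin (k n)), Qmix unif (sigM h κ rzero n i) (ε n i) = qm (q n i)) (n : ℕ) :
    lawPV_P h κ rzero ε k n = (PR (q n) (hq n) : Measure ℝ).map (fun x : ℝ => (x : EReal)) := by
  rw [lawPV_P]
  change _ = ((Measure.pi (fun _ : Fin (k n) => unif)).map (RT (q n))).map _
  rw [Measure.map_map measurable_coe_real_ereal (measurable_RT _ (hq n)), PprodU]
  refine Measure.map_congr ?_
  have := sum_log_eq (q n) (hq n) (fun _ => unif) (fun _ => inferInstance) (fun _ => Measure.AbsolutelyContinuous.rfl)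
  simp only [← hQ] at this
  exact this

lemma weakLim_Q (h : ℕ → ℕ → ℝ → ℝ) (κ : ℕ → ℕ → ℝ) (ε : ℕ → ℕ → ℝ) (k : ℕ → ℕ)
    (q : ∀ n, Fin (k n) → ℝ → ℝ) (hq : ∀ n i, GoodQ (q n i))
    (hQ : ∀ n (i : Fin (k n)), Qmix unif (sigM h κ rzero n i) (ε n i) = qm (q n i)) (n : ℕ) :
    lawPV_Q h κ rzero ε k n = (QR (q n) (hq n) : Measure ℝ).map (fun x : ℝ => (x : EReal)) := by
  rw [lawPV_Q]
  change _ = ((Measure.pi (fun i : Fin (k n) => qm (q n i))).map (RT (q n))).map _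
  rw [Measure.map_map measurable_coe_real_ereal (measurable_RT _ (hq n)), QprodPV]
  simp only [hQ]
  refine Measure.map_congr ?_
  have := sum_log_eq (q n) (hq n) (fun i => qm (q n i)) (fun i => (hq n i).prob) (fun i => qm_ac _)
  have h2 : TstatPV h κ rzero ε k n = (fun y : Fin (k n) → ℝ => ∑ i, ENNReal.log (elr (qm (q n i)) unif (y i))) := by
    ext y; simp only [TstatPV, hQ]
  rw [h2]
  exact this


lemma weakLim_coe (μ : ℕ → ProbabilityMeasure ℝ) (ν : ProbabilityMeasure ℝ) (h : Tendsto μ atTop (𝓝 ν)) :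
    WeakLim (fun n => (μ n : Measure ℝ).map (fun x : ℝ => (x : EReal)))
      ((ν : Measure ℝ).map (fun x : ℝ => (x : EReal))) := by
  intro f
  have hm : ∀ ρ : Measure ℝ, ∫ x, f x ∂(ρ.map (fun x : ℝ => (x : EReal))) = ∫ x : ℝ, f x ∂ρ := fun ρ =>
    integral_map measurable_coe_real_ereal.aemeasurable f.continuous.measurable.aestronglyMeasurable
  simp only [hm]
  rw [ProbabilityMeasure.tendsto_iff_forall_integral_tendsto] at h
  exact h (f.compContinuous ⟨_, continuous_coe_real_ereal⟩)

lemma contig (μ ρ : ℕ → ProbabilityMeasure ℝ)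
    (hρ : ∀ n, (ρ n : Measure ℝ) = (μ n : Measure ℝ).withDensity (fun x => ENNReal.ofReal (Real.exp x)))
    (c : ℝ) (hc : c ≤ 0) (ν : ProbabilityMeasure ℝ) (hν : (ν : Measure ℝ) = Measure.dirac c) (h : Tendsto μ atTop (𝓝 ν)) :
    WeakLim (fun n => (ρ n : Measure ℝ).map (fun x : ℝ => (x : EReal)))
      ((ENNReal.ofReal (Real.exp c)) • Measure.dirac (c : EReal) +
          (ENNReal.ofReal (1 - Real.exp c)) • Measure.dirac (⊤ : EReal)) := by
  intro f
  have hm : ∀ ρ : Measure ℝ, ∫ x, f x ∂(ρ.map (fun x : ℝ => (x : EReal))) = ∫ x : ℝ, f x ∂ρ := fun ρ =>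
    integral_map measurable_coe_real_ereal.aemeasurable f.continuous.measurable.aestronglyMeasurable
  simp only [hm]
  have hec : Real.exp c ≤ 1 := Real.exp_le_one_iff.2 hc
  have hlim : ∫ x, f x ∂((ENNReal.ofReal (Real.exp c)) • Measure.dirac (c : EReal) +
          (ENNReal.ofReal (1 - Real.exp c)) • Measure.dirac (⊤ : EReal)) = (f c - f ⊤) * Real.exp c + f ⊤ := by
    have hfi : ∀ x : EReal, Integrable f (Measure.dirac x) := fun x => f.integrable _
    rw [integral_add_measure ((hfi _).smul_measure ENNReal.ofReal_ne_top) ((hfi _).smul_measure ENNReal.ofReal_ne_top),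
      integral_smul_measure, integral_smul_measure, integral_dirac, integral_dirac,
      ENNReal.toReal_ofReal (Real.exp_pos _).le, ENNReal.toReal_ofReal (by linarith)]
    simp only [smul_eq_mul]; ring
  rw [hlim]
  have hfc : Continuous (fun x : ℝ => f (x : EReal)) := f.continuous.comp continuous_coe_real_ereal
  rw [Metric.tendsto_atTop]
  intro e he
  have hnear : ∀ᶠ x in 𝓝 (⊤ : EReal), dist (f x) (f ⊤) < e / 2 :=
    (f.continuous.tendsto ⊤).eventually (Metric.ball_mem_nhds _ (by positivity))
  obtain ⟨K0, hK0⟩ := EReal.mem_nhds_top_iff.1 hnear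
  set K : ℝ := max (K0 + 1) c with hK
  have hKt : ∀ x : ℝ, K < x → |f x - f ⊤| ≤ e / 2 := by
    intro x hx
    have : (x : EReal) ∈ Set.Ioi (K0 : EReal) := by
      simp only [Set.mem_Ioi, EReal.coe_lt_coe_iff]
      have := le_max_left (K0 + 1) c
      linarith
    exact (hK0 this).le
  let χ : ℝ → ℝ := fun x => max 0 (min 1 (K + 1 - x))
  have χc : Continuous χ := by fun_prop
  have χ0 : ∀ x, 0 ≤ χ x := fun x => le_max_left _ _
  have χ1 : ∀ x, χ x ≤ 1 := fun x => max_le zero_le_one (min_le_left _ _)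
  have χK : ∀ x, x ≤ K → χ x = 1 := fun x hx => by
    simp only [χ]; rw [min_eq_left (by linarith)]; simp
  have χK1 : ∀ x, K + 1 ≤ x → χ x = 0 := fun x hx => by
    simp only [χ]; rw [max_eq_left]; exact (min_le_right _ _).trans (by linarith)
  let B : ℝ := 2 * ‖f‖
  have hB : ∀ x : EReal, |f x - f ⊤| ≤ B := fun x => by
    have h1 := f.norm_coe_le_norm x
    have h2 := f.norm_coe_le_norm ⊤
    have h3 := norm_sub_le (f x) (f ⊤)
    rw [Real.norm_eq_abs] at h3
    simp only [B]; linarith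
  have hB0 : 0 ≤ B := (abs_nonneg _).trans (hB 0)
  let G : BoundedContinuousFunction ℝ ℝ := BoundedContinuousFunction.ofNormedAddCommGroup
    (fun x : ℝ => Real.exp x * ((f x - f ⊤) * χ x)) (Real.continuous_exp.mul ((hfc.sub continuous_const).mul χc)) (Real.exp (K + 1) * B) (by
      intro x
      rcases le_total (K + 1) x with hx | hx
      · rw [χK1 x hx]; simp; positivity
      · rw [norm_mul, norm_mul, Real.norm_eq_abs, Real.norm_eq_abs, Real.norm_eq_abs, Real.abs_exp, abs_of_nonneg (χ0 x)]
        refine mul_le_mul (Real.exp_le_exp.2 hx) ?_ (by have := χ0 x; positivity) (Real.exp_pos _).le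
        calc _ ≤ B * 1 := mul_le_mul (hB x) (χ1 x) (χ0 x) hB0
          _ = B := mul_one _)
  rw [ProbabilityMeasure.tendsto_iff_forall_integral_tendsto] at h
  have hG := h G
  rw [hν, integral_dirac] at hG
  have hGc : G c = (f c - f ⊤) * Real.exp c := by
    change Real.exp c * ((f c - f ⊤) * χ c) = _
    rw [χK c (le_max_right _ _)]; ring
  rw [hGc, Metric.tendsto_atTop] at hG
  obtain ⟨N, hN⟩ := hG (e / 2) (by positivity)
  refine ⟨N, fun n hn => ?_⟩
  have h1 := hN n hn
  have hmeas1 : ∀ ψ : ℝ → ℝ, Continuous ψ → (∀ x, |ψ x| ≤ B) → Integrable ψ (ρ n : Measure ℝ) := fun ψ h1 h2 =>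
    Integrable.of_bound h1.aestronglyMeasurable B (ae_of_all _ h2)
  have i1 : Integrable (fun x : ℝ => (f x - f ⊤) * χ x) (ρ n : Measure ℝ) := hmeas1 _ ((hfc.sub continuous_const).mul χc) fun x => by
    rw [abs_mul, abs_of_nonneg (χ0 x)]
    calc _ ≤ B * 1 := mul_le_mul (hB x) (χ1 x) (χ0 x) hB0
      _ = B := mul_one _
  have i2 : Integrable (fun x : ℝ => (f x - f ⊤) * (1 - χ x)) (ρ n : Measure ℝ) := hmeas1 _ ((hfc.sub continuous_const).mul (continuous_const.sub χc)) fun x => by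
    rw [abs_mul, abs_of_nonneg (a := 1 - χ x) (by linarith [χ1 x])]
    calc _ ≤ B * 1 := mul_le_mul (hB x) (by linarith [χ0 x]) (by linarith [χ1 x]) hB0
      _ = B := mul_one _
  have hsplit : ∫ x : ℝ, f x ∂(ρ n : Measure ℝ) =
      ∫ x, G x ∂(μ n : Measure ℝ) + ∫ x : ℝ, (f x - f ⊤) * (1 - χ x) ∂(ρ n : Measure ℝ) + f ⊤ := by
    have e1 : ∫ x, G x ∂(μ n : Measure ℝ) = ∫ x : ℝ, (f x - f ⊤) * χ x ∂(ρ n : Measure ℝ) := by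
      rw [hρ n, integral_withDensity_eq_integral_toReal_smul (by fun_prop) (by simp)]
      refine integral_congr_ae (ae_of_all _ fun x => ?_)
      simp only [ENNReal.toReal_ofReal (Real.exp_pos x).le, smul_eq_mul]
      rfl
    have e3 : ∫ x : ℝ, (f x - f ⊤) ∂(ρ n : Measure ℝ) = ∫ x : ℝ, f x ∂(ρ n : Measure ℝ) - f ⊤ := by
      have hfi : Integrable (fun x : ℝ => f x) (ρ n : Measure ℝ) :=
        Integrable.of_bound hfc.aestronglyMeasurable ‖f‖ (ae_of_all _ fun x => f.norm_coe_le_norm x)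
      rw [integral_sub hfi (by simp)]; simp
    rw [e1, ← integral_add i1 i2]
    have e4 : ∫ x : ℝ, ((f x - f ⊤) * χ x + (f x - f ⊤) * (1 - χ x)) ∂(ρ n : Measure ℝ) =
        ∫ x : ℝ, (f x - f ⊤) ∂(ρ n : Measure ℝ) := by
      refine integral_congr_ae (ae_of_all _ fun x => ?_)
      simp only; ring
    rw [e4, e3]; ring
  have hsmall : |∫ x : ℝ, (f x - f ⊤) * (1 - χ x) ∂(ρ n : Measure ℝ)| ≤ e / 2 := by
    have := norm_integral_le_of_norm_le_const (μ := (ρ n : Measure ℝ)) (C := e / 2) (f := fun x : ℝ => (f x - f ⊤) * (1 - χ x))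
      (ae_of_all _ fun x => by
        rw [Real.norm_eq_abs, abs_mul, abs_of_nonneg (a := 1 - χ x) (by linarith [χ1 x])]
        rcases le_or_gt x K with hx | hx
        · rw [χK x hx]; simp; positivity
        · calc _ ≤ e / 2 * 1 := mul_le_mul (hKt x hx) (by linarith [χ0 x]) (by linarith [χ1 x]) (by positivity)
            _ = _ := mul_one _)
    simpa using this
  rw [hsplit]
  rw [Real.dist_eq] at h1 ⊢
  rw [show ∀ a b c d : ℝ, a + b + c - (d + c) = (a - d) + b by intros; ring]
  refine (abs_add_le _ _).trans_lt ?_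
  linarith

lemma tendsto_dirac (μ : ℕ → ProbabilityMeasure ℝ) (c : ℝ)
    (h : ∀ t : ℝ, Tendsto (fun n ↦ charFun (μ n : Measure ℝ) t) atTop (𝓝 (Complex.exp (c * t * Complex.I)))) :
    ∃ ν : ProbabilityMeasure ℝ, (ν : Measure ℝ) = Measure.dirac c ∧ Tendsto μ atTop (𝓝 ν) := by
  obtain ⟨ν, h1, h2⟩ := exists_of_charFun μ _ (by fun_prop) h
  refine ⟨ν, ?_, h2⟩
  refine Measure.ext_of_charFun ?_
  ext t
  rw [h1 t, charFun_apply_real, integral_dirac]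
  congr 1; ring


lemma ae_pos_of {M : Measure ℝ} (hM0 : M (Set.Iic 0) = 0) : ∀ᵐ x ∂M, 0 < x := by
  rw [ae_iff]
  refine measure_mono_null (fun x hx => ?_) hM0
  exact not_lt.1 hx

lemma levy_isLevy (M : Measure ℝ) [IsProbabilityMeasure M] (hM0 : M (Set.Iic 0) = 0) (v : ℝ → ℝ) (hv : Measurable v)
    (v0 : ∀ x, 0 < x → 0 ≤ v x) (v1 : ∀ x, 0 < x → v x * x ≤ 1 + x) :
    IsLevyMeasure (M.withDensity (fun x => ENNReal.ofReal (v x))) := by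
  constructor
  · exact (withDensity_absolutelyContinuous M _) (measure_mono_null (by simp) hM0)
  · rw [lintegral_withDensity_eq_lintegral_mul _ hv.ennreal_ofReal (by fun_prop)]
    have : ∫⁻ x, ((fun x => ENNReal.ofReal (v x)) * fun x => ENNReal.ofReal (min (x ^ 2) 1)) x ∂M ≤ ∫⁻ x, 2 ∂M := by
      refine lintegral_mono_ae ?_
      filter_upwards [ae_pos_of hM0] with x hx
      simp only [Pi.mul_apply]
      rw [← ENNReal.ofReal_mul (v0 x hx)]
      have h2 : (2 : ENNReal) = ENNReal.ofReal 2 := by simp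
      rw [h2]
      refine ENNReal.ofReal_le_ofReal ?_
      have a0 := v0 x hx
      have a1 := v1 x hx
      rcases le_total x 1 with h | h
      · calc v x * min (x ^ 2) 1 ≤ v x * x ^ 2 := mul_le_mul_of_nonneg_left (min_le_left _ _) a0
          _ = (v x * x) * x := by ring
          _ ≤ (1 + x) * x := mul_le_mul_of_nonneg_right a1 hx.le
          _ ≤ 2 := by nlinarith
      · calc v x * min (x ^ 2) 1 ≤ v x * 1 := mul_le_mul_of_nonneg_left (min_le_right _ _) a0
          _ ≤ 2 := by nlinarith
    refine ne_top_of_le_ne_top ?_ this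
    simp

lemma levy_b_int (M : Measure ℝ) [IsProbabilityMeasure M] (hM0 : M (Set.Iic 0) = 0) (v : ℝ → ℝ) (hv : Measurable v)
    (v0 : ∀ x, 0 < x → 0 ≤ v x) (v1 : ∀ x, 0 < x → v x * x ≤ 1 + x) :
    Integrable (fun x => v x * (x / (1 + x ^ 2))) M := by
  refine Integrable.of_bound (Measurable.aestronglyMeasurable (by fun_prop)) 2 ?_
  filter_upwards [ae_pos_of hM0] with x hx
  have a0 := v0 x hx
  have a1 := v1 x hx
  rw [Real.norm_eq_abs, abs_of_nonneg (by positivity), ← mul_div_assoc, div_le_iff₀ (by positivity)]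
  nlinarith [sq_nonneg (x - 1), sq_nonneg x]

lemma integral_wd {E : Type*} [NormedAddCommGroup E] [NormedSpace ℝ E] (M : Measure ℝ) (hM0 : M (Set.Iic 0) = 0) (v : ℝ → ℝ) (hv : Measurable v)
    (v0 : ∀ x, 0 < x → 0 ≤ v x) (f : ℝ → E) :
    ∫ x, f x ∂(M.withDensity (fun x => ENNReal.ofReal (v x))) = ∫ x, v x • f x ∂M := by
  rw [integral_withDensity_eq_integral_toReal_smul hv.ennreal_ofReal (by simp)]
  refine integral_congr_ae ?_
  filter_upwards [ae_pos_of hM0] with x hx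
  simp only [ENNReal.toReal_ofReal (v0 x hx)]

lemma levy_exponent (M : Measure ℝ) [IsProbabilityMeasure M] (hM0 : M (Set.Iic 0) = 0) (v : ℝ → ℝ) (hv : Measurable v)
    (v0 : ∀ x, 0 < x → 0 ≤ v x) (v1 : ∀ x, 0 < x → v x * x ≤ 1 + x) (t : ℝ)
    (F : ℝ → ℂ) (hF : ∀ x, 0 < x → F x = v x * (Complex.exp (t * x * Complex.I) - 1)) (hFi : Integrable F M) (γ : ℝ) :
    levyExponent γ 0 (M.withDensity (fun x => ENNReal.ofReal (v x))) t =
      Complex.I * γ * t + ∫ x, F x ∂M - Complex.I * t * ((∫ x, v x * (x / (1 + x ^ 2)) ∂M : ℝ) : ℂ) := by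
  rw [levyExponent, integral_wd M hM0 v hv v0]
  have hb := levy_b_int M hM0 v hv v0 v1
  have e1 : ∫ x, v x • (Complex.exp (Complex.I * (t : ℂ) * (x : ℂ)) - 1 -
      Complex.I * (t : ℂ) * (x : ℂ) / (1 + (x : ℂ) ^ 2)) ∂M =
      ∫ x, (F x - Complex.I * t * ((v x * (x / (1 + x ^ 2)) : ℝ) : ℂ)) ∂M := by
    refine integral_congr_ae ?_
    filter_upwards [ae_pos_of hM0] with x hx
    rw [hF x hx, Complex.real_smul]
    have : Complex.I * (t : ℂ) * (x : ℂ) = t * x * Complex.I := by ring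
    rw [this]; push_cast; ring
  have hb2 : Integrable (fun x => Complex.I * t * ((v x * (x / (1 + x ^ 2)) : ℝ) : ℂ)) M :=
    Integrable.const_mul (f := fun x => ((v x * (x / (1 + x ^ 2)) : ℝ) : ℂ)) hb.ofReal _
  rw [e1, integral_sub hFi hb2, integral_const_mul, integral_complex_ofReal]
  simp; ring

lemma levy_cont (M : Measure ℝ) [IsProbabilityMeasure M] (hM0 : M (Set.Iic 0) = 0) (v : ℝ → ℝ)
    (F : ℝ → ℝ → ℂ) (hF : ∀ t x, 0 < x → F t x = v x * (Complex.exp (t * x * Complex.I) - 1))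
    (hFc : ∀ t, Continuous (F t)) (hFb : ∀ t x, ‖F t x‖ ≤ 2 + 2 * |t|) :
    ContinuousAt (fun t : ℝ => Complex.exp (-(t * Complex.I) + ∫ x, F t x ∂M)) 0 := by
  have h1 : ContinuousAt (fun t : ℝ => ∫ x, F t x ∂M) 0 := by
    refine continuousAt_of_dominated (bound := fun _ => 4) (Eventually.of_forall fun t => (hFc t).aestronglyMeasurable) ?_ (by simp) ?_
    · filter_upwards [Metric.ball_mem_nhds (0:ℝ) one_pos] with t ht
      refine ae_of_all _ fun x => ?_
      have : |t| < 1 := by simpa using ht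
      linarith [hFb t x]
    · filter_upwards [ae_pos_of hM0] with x hx
      have : (fun t => F t x) = fun t : ℝ => v x * (Complex.exp (t * x * Complex.I) - 1) := by
        ext t; exact hF t x hx
      rw [this]
      fun_prop
  have h2 : ContinuousAt (fun t : ℝ => -((t:ℂ) * Complex.I)) 0 := by fun_prop
  exact (h2.add h1).cexp

lemma Fa_pos (W : ℝ → ℂ) (hW : W 1 = 0) (x : ℝ) (hx : 0 < x) : Fa W 1 x = ((Real.exp x - 1)⁻¹ : ℝ) * W (Real.exp x) := by
  have h1 : Real.exp x ≠ 1 := by simp [hx.ne']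
  rw [Fa, max_eq_left hx.le, one_mul, add_sub_cancel, dslope_of_ne _ h1, slope_def_module, hW, sub_zero, Complex.real_smul]

lemma Fa1 (t x : ℝ) (hx : 0 < x) : Fa (fun s => Complex.exp (t * Real.log s * Complex.I) - 1) 1 x =
    ((Real.exp x - 1)⁻¹ : ℝ) * (Complex.exp (t * x * Complex.I) - 1) := by
  rw [Fa_pos _ (by simp) _ hx, Real.log_exp]

lemma Fa2 (t x : ℝ) (hx : 0 < x) : Fa (fun s => (s:ℂ) * (Complex.exp (t * Real.log s * Complex.I) - 1)) 1 x =
    (Real.exp x / (Real.exp x - 1) : ℝ) * (Complex.exp (t * x * Complex.I) - 1) := by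
  rw [Fa_pos _ (by simp) _ hx, Real.log_exp]; push_cast; ring

lemma v1_facts (x : ℝ) (hx : 0 < x) : 0 ≤ (Real.exp x - 1)⁻¹ ∧ (Real.exp x - 1)⁻¹ * x ≤ 1 + x ∧
    0 ≤ Real.exp x / (Real.exp x - 1) ∧ Real.exp x / (Real.exp x - 1) * x ≤ 1 + x := by
  have h1 := Real.add_one_le_exp x
  have h2 : 0 < Real.exp x - 1 := by linarith
  have h3 : (Real.exp x - 1)⁻¹ * x ≤ 1 := by rw [inv_mul_le_iff₀ h2]; linarith
  have h4 : Real.exp x / (Real.exp x - 1) = 1 + (Real.exp x - 1)⁻¹ := by field_simp; ring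
  refine ⟨by positivity, by linarith, by positivity, ?_⟩
  rw [h4]; linarith

lemma levy_both (M : Measure ℝ) [IsProbabilityMeasure M] (hM0 : M (Set.Iic 0) = 0) :
    ∃ γ1 γ2 : ℝ,
      (0 : ℝ) = γ1 - (∫ x in Set.Ioi (0 : ℝ), (1 - Real.exp x + x / (1 + x ^ 2))
            ∂(M.withDensity (fun x => ENNReal.ofReal ((Real.exp x - 1)⁻¹)))) ∧
      γ2 = γ1 + (∫ x in Set.Ioi (0 : ℝ), ((Real.exp x - 1) * (x / (1 + x ^ 2)))
            ∂(M.withDensity (fun x => ENNReal.ofReal ((Real.exp x - 1)⁻¹)))) ∧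
      (∀ t : ℝ, levyExponent γ1 0 (M.withDensity (fun x => ENNReal.ofReal ((Real.exp x - 1)⁻¹))) t =
        -(t * Complex.I) + ∫ x, Fa (fun s => Complex.exp (t * Real.log s * Complex.I) - 1) 1 x ∂M) ∧
      (∀ t : ℝ, levyExponent γ2 0 (M.withDensity (fun x => ENNReal.ofReal (Real.exp x / (Real.exp x - 1)))) t =
        -(t * Complex.I) + ∫ x, Fa (fun s => (s:ℂ) * (Complex.exp (t * Real.log s * Complex.I) - 1)) 1 x ∂M) := by
  have hr : ∀ (v : ℝ → ℝ) (f : ℝ → ℝ), ∫ x in Set.Ioi (0:ℝ), f x ∂(M.withDensity (fun x => ENNReal.ofReal (v x))) =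
      ∫ x, f x ∂(M.withDensity (fun x => ENNReal.ofReal (v x))) := by
    intro v f
    congr 1
    refine Measure.restrict_eq_self_of_ae_mem ?_
    exact (withDensity_absolutelyContinuous M _).ae_le (ae_pos_of hM0)
  have m1 : Measurable fun x : ℝ => (Real.exp x - 1)⁻¹ := by fun_prop
  have m2 : Measurable fun x : ℝ => Real.exp x / (Real.exp x - 1) := by fun_prop
  have b1 := levy_b_int M hM0 _ m1 (fun x hx => (v1_facts x hx).1) (fun x hx => (v1_facts x hx).2.1)
  set A : ℝ := ∫ x, (Real.exp x - 1)⁻¹ * (x / (1 + x ^ 2)) ∂M with hA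
  set C : ℝ := ∫ x, (x / (1 + x ^ 2)) ∂M with hC
  have bC : Integrable (fun x : ℝ => x / (1 + x ^ 2)) M := by
    refine Integrable.of_bound (Measurable.aestronglyMeasurable (by fun_prop)) 1 (ae_of_all _ fun x => ?_)
    rw [Real.norm_eq_abs, abs_div, abs_of_pos (by positivity : 0 < 1 + x ^ 2), div_le_one (by positivity)]
    nlinarith [sq_abs x, sq_nonneg (|x| - 1)]
  have hg1 : ∫ x in Set.Ioi (0 : ℝ), (1 - Real.exp x + x / (1 + x ^ 2))
            ∂(M.withDensity (fun x => ENNReal.ofReal ((Real.exp x - 1)⁻¹))) = -1 + A := by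
    rw [hr, integral_wd M hM0 _ m1 (fun x hx => (v1_facts x hx).1)]
    have : ∫ x, (Real.exp x - 1)⁻¹ • (1 - Real.exp x + x / (1 + x ^ 2)) ∂M =
        ∫ x, (-1 + (Real.exp x - 1)⁻¹ * (x / (1 + x ^ 2))) ∂M := by
      refine integral_congr_ae ?_
      filter_upwards [ae_pos_of hM0] with x hx
      have h2 : Real.exp x - 1 ≠ 0 := by have := Real.add_one_le_exp x; linarith
      rw [smul_eq_mul, mul_add]; congr 1; field_simp; ring
    rw [this, integral_add (by simp) b1]; simp [hA]
  have hg2 : ∫ x in Set.Ioi (0 : ℝ), ((Real.exp x - 1) * (x / (1 + x ^ 2)))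
            ∂(M.withDensity (fun x => ENNReal.ofReal ((Real.exp x - 1)⁻¹))) = C := by
    rw [hr, integral_wd M hM0 _ m1 (fun x hx => (v1_facts x hx).1)]
    refine integral_congr_ae ?_
    filter_upwards [ae_pos_of hM0] with x hx
    have h2 : Real.exp x - 1 ≠ 0 := by have := Real.add_one_le_exp x; linarith
    rw [smul_eq_mul, ← mul_assoc, inv_mul_cancel₀ h2, one_mul]
  have hAC : ∫ x, Real.exp x / (Real.exp x - 1) * (x / (1 + x ^ 2)) ∂M = A + C := by
    rw [hA, hC, ← integral_add b1 bC]
    refine integral_congr_ae ?_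
    filter_upwards [ae_pos_of hM0] with x hx
    have h2 : Real.exp x - 1 ≠ 0 := by have := Real.add_one_le_exp x; linarith
    have h4 : Real.exp x / (Real.exp x - 1) = (Real.exp x - 1)⁻¹ + 1 := by field_simp; ring
    rw [h4]; ring
  have hFi : ∀ {W : ℝ → ℂ} {L : ℝ} {d : ℂ}, GoodW W L d → Integrable (Fa W 1) M := fun hW =>
    Integrable.of_bound (hW.continuous_Fa zero_le_one).aestronglyMeasurable _ (ae_of_all _ (hW.norm_Fa zero_le_one))
  refine ⟨-1 + A, -1 + A + C, by rw [hg1]; ring, by rw [hg2], fun t => ?_, fun t => ?_⟩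
  · rw [levy_exponent M hM0 _ m1 (fun x hx => (v1_facts x hx).1) (fun x hx => (v1_facts x hx).2.1) t _ (Fa1 t) (hFi (goodW1 t)), ← hA]
    push_cast; ring
  · rw [levy_exponent M hM0 _ m2 (fun x hx => (v1_facts x hx).2.2.1) (fun x hx => (v1_facts x hx).2.2.2) t _ (Fa2 t) (hFi (goodW2 t)), hAC]
    push_cast; ring


lemma exists_g (h : ℝ → ℝ) (h0 : ∀ x ∈ Set.Ioo (0:ℝ) 1, 0 ≤ h x) (h1 : ∫ x in Set.Ioo (0 : ℝ) 1, h x = 1) :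
    ∃ g, GoodG g ∧ ∀ᵐ x, x ∈ Set.Ioo (0:ℝ) 1 → h x = g x := by
  have hi : IntegrableOn h (Set.Ioo 0 1) := by
    by_contra hc
    rw [integral_undef hc] at h1
    exact zero_ne_one h1
  have hm := hi.aestronglyMeasurable.aemeasurable
  have hae : h =ᵐ[volume.restrict (Set.Ioo 0 1)] fun x => max 0 (hm.mk h x) := by
    filter_upwards [hm.ae_eq_mk, ae_restrict_mem measurableSet_Ioo] with x hx hx2
    rw [← hx, max_eq_right (h0 x hx2)]
  refine ⟨fun x => max 0 (hm.mk h x), ⟨measurable_const.max hm.measurable_mk, fun x => le_max_left _ _, ?_, ?_⟩, ?_⟩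
  · exact hi.congr hae
  · exact (integral_congr_ae hae).symm.trans h1
  · exact (ae_restrict_iff' measurableSet_Ioo).1 hae

lemma tails_conv (k : ℕ → ℕ) (hk : ∀ n, 2 ≤ k n) (h : ℕ → ℕ → ℝ → ℝ) (g : ℕ → ℕ → ℝ → ℝ)
    (hG : ∀ n i, GoodG (g n i)) (hg : ∀ n i, ∀ᵐ x, x ∈ Set.Ioo (0:ℝ) 1 → h n i x = g n i x) (x m : ℝ)
    (hconv : Tendsto (fun n => ⨆ i : Fin (k n),
      |(∫ t in Set.Ioo (0 : ℝ) 1,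
          h n i t * (if Real.exp x - 1 < h n i t then (1 : ℝ) else 0)) - m|) atTop (nhds 0)) :
    Tendsto (fun n => (Mbar (fun i : Fin (k n) => g n i)).real (Set.Ioi x)) atTop (𝓝 m) := by
  rw [tendsto_iff_norm_sub_tendsto_zero]
  refine squeeze_zero (fun _ => norm_nonneg _) (fun n => ?_) hconv
  have hkp : (0:ℝ) < k n := by exact_mod_cast (by have := hk n; omega : 0 < k n)
  rw [Mbar_real_Ioi (fun i : Fin (k n) => g n i) (fun i => hG n i)]
  have he : ∀ i : Fin (k n), ∫ t in Set.Ioo (0 : ℝ) 1, g n i t * (if Real.exp x - 1 < g n i t then (1 : ℝ) else 0) =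
      ∫ t in Set.Ioo (0 : ℝ) 1, h n i t * (if Real.exp x - 1 < h n i t then (1 : ℝ) else 0) := by
    intro i
    refine setIntegral_congr_ae measurableSet_Ioo ?_
    filter_upwards [hg n i] with t ht htm
    rw [ht htm]
  simp_rw [he]
  set a : Fin (k n) → ℝ := fun i => ∫ t in Set.Ioo (0 : ℝ) 1, h n i t * (if Real.exp x - 1 < h n i t then (1 : ℝ) else 0) with ha
  have e1 : (k n : ℝ)⁻¹ * ∑ i, a i - m = (k n : ℝ)⁻¹ * ∑ i, (a i - m) := by
    rw [Finset.sum_sub_distrib]; simp; field_simp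
  rw [e1, norm_mul, norm_inv, Real.norm_of_nonneg hkp.le, inv_mul_le_iff₀ hkp]
  calc ‖∑ i, (a i - m)‖ ≤ ∑ i : Fin (k n), ⨆ i : Fin (k n), |a i - m| := by
        refine norm_sum_le_of_le _ fun i _ => ?_
        exact le_ciSup (f := fun i => |a i - m|) (Set.finite_range _).bddAbove i
    _ = k n * ⨆ i : Fin (k n), |a i - m| := by simp

lemma GoodW.prod_lim {W : ℝ → ℂ} {L : ℝ} {d : ℂ} (hW : GoodW W L d)
    (k : ℕ → ℕ) (hk : ∀ n, 2 ≤ k n) (hkt : Tendsto k atTop atTop) (g : ∀ n, Fin (k n) → ℝ → ℝ)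
    (hG : ∀ n i, GoodG (g n i)) (κ : ℕ → ℝ) (hκ0 : ∀ n, 0 < κ n) (hκ1 : ∀ n, κ n ≤ 1)
    (hκ : Tendsto κ atTop (𝓝 0)) (J : ℂ)
    (hJ : Tendsto (fun n => ∫ x, Fa W (((k n:ℝ) * κ n)⁻¹) x ∂(Mbar (g n))) atTop (𝓝 J)) :
    Tendsto (fun n => ∏ i, (1 + ∫ x in Set.Ioo (0:ℝ) 1, W (qf (1 - (k n:ℝ)⁻¹) (κ n) (((k n:ℝ) * κ n)⁻¹) (g n i) x)))
      atTop (𝓝 (Complex.exp (-d + J))) := by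
  refine prod_one_add_tendsto k hkt _ (2 * L) (fun n i => ?_) _ ?_
  · exact hW.integral_bound (k n) (by exact_mod_cast hk n) (κ n) (hκ0 n) (hκ1 n) (g n i) (hG n i).nonneg (hG n i).int (hG n i).one
  · have := (hW.Ssum_sub k hk hkt g hG κ hκ0 hκ1 hκ).add hJ
    simpa [Ssum] using this

lemma core
    (k : ℕ → ℕ) (h : ℕ → ℕ → ℝ → ℝ) (κ : ℕ → ℕ → ℝ) (ε : ℕ → ℕ → ℝ)
    (rr : ℝ) (D : Set ℝ) (M : Measure ℝ) (hk2 : ∀ n, 2 ≤ k n)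
    (hk : Tendsto k atTop atTop)
    (hrr : 0 < rr)
    (hκ : ∀ n i, κ n i = (k n : ℝ) ^ (-rr))
    (hε : ∀ n i, ε n i = ((k n : ℝ))⁻¹)
    (hh : ∀ n i, (∀ x ∈ Set.Ioo (0 : ℝ) 1, 0 ≤ h n i x) ∧
      (∫ x in Set.Ioo (0 : ℝ) 1, h n i x) = 1)
    (hD : D ⊆ Set.Ioi 0) (hDdense : Set.Ioi (0 : ℝ) ⊆ closure D)
    (hM0 : M (Set.Iic 0) = 0)
    (hMfin : ∀ x ∈ D, M (Set.Ioi x) ≠ ⊤)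
    (hconv : ∀ x ∈ D, Tendsto (fun n => ⨆ i : Fin (k n),
      |(∫ t in Set.Ioo (0 : ℝ) 1,
          h n i t * (if Real.exp x - 1 < h n i t then (1 : ℝ) else 0)) -
        (M (Set.Ioi x)).toReal|) atTop (nhds 0)) :
    (rr < 1 →
      WeakLim (lawPV_P h κ rzero ε k) (Measure.dirac ((0 : ℝ) : EReal)) ∧
      WeakLim (lawPV_Q h κ rzero ε k) (Measure.dirac ((0 : ℝ) : EReal))) ∧
    (rr = 1 →
      ∃ (ν1 ν2 : Measure ℝ) (γ1 γ2 : ℝ),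
        IsProbabilityMeasure ν1 ∧ IsProbabilityMeasure ν2 ∧
        HasLevyTriplet ν1 γ1 0
          (M.withDensity (fun x => ENNReal.ofReal ((Real.exp x - 1)⁻¹))) ∧
        HasLevyTriplet ν2 γ2 0
          (M.withDensity (fun x => ENNReal.ofReal (Real.exp x / (Real.exp x - 1)))) ∧
        (0 : ℝ) = γ1 - (∫ x in Set.Ioi (0 : ℝ), (1 - Real.exp x + x / (1 + x ^ 2))
            ∂(M.withDensity (fun x => ENNReal.ofReal ((Real.exp x - 1)⁻¹)))) ∧
        γ2 = γ1 + (∫ x in Set.Ioi (0 : ℝ), ((Real.exp x - 1) * (x / (1 + x ^ 2)))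
            ∂(M.withDensity (fun x => ENNReal.ofReal ((Real.exp x - 1)⁻¹)))) ∧
        WeakLim (lawPV_P h κ rzero ε k) (ν1.map (fun x : ℝ => (x : EReal))) ∧
        WeakLim (lawPV_Q h κ rzero ε k) (ν2.map (fun x : ℝ => (x : EReal)))) ∧
    (1 < rr →
      WeakLim (lawPV_P h κ rzero ε k) (Measure.dirac ((-1 : ℝ) : EReal)) ∧
      WeakLim (lawPV_Q h κ rzero ε k)
        ((ENNReal.ofReal (Real.exp (-1))) • Measure.dirac ((-1 : ℝ) : EReal) +
          (ENNReal.ofReal (1 - Real.exp (-1))) • Measure.dirac (⊤ : EReal))) := by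
  have hkR : Tendsto (fun n => (k n : ℝ)) atTop atTop := tendsto_natCast_atTop_atTop.comp hk
  have hk2R : ∀ n, (2:ℝ) ≤ k n := fun n => by exact_mod_cast hk2 n
  have hkpos : ∀ n, (0:ℝ) < k n := fun n => by linarith [hk2R n]
  set κ0 : ℕ → ℝ := fun n => (k n : ℝ) ^ (-rr) with hkapdef
  have κpos : ∀ n, 0 < κ0 n := fun n => Real.rpow_pos_of_pos (hkpos n) _
  have κle : ∀ n, κ0 n ≤ 1 := fun n => Real.rpow_le_one_of_one_le_of_nonpos (by linarith [hk2R n]) (by linarith)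
  have κlim : Tendsto κ0 atTop (𝓝 0) := (tendsto_rpow_neg_atTop hrr).comp hkR
  have ha : ∀ n, ((k n : ℝ) * κ0 n)⁻¹ = (k n : ℝ) ^ (rr - 1) := by
    intro n
    have e : (k n : ℝ) * κ0 n = (k n : ℝ) ^ (1 - rr) := by
      rw [sub_eq_add_neg, Real.rpow_add (hkpos n), Real.rpow_one]
    rw [e, ← Real.rpow_neg (hkpos n).le]
    congr 1; ring
  choose g hG hg using fun n i => exists_g (h n i) (hh n i).1 (hh n i).2
  obtain ⟨ν, hνM, hν⟩ := M_facts k hk2 (fun n i => g n i) (fun n i => hG n i) D M hD hDdense hM0 hMfin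
    (fun x hx => tails_conv k hk2 h g hG hg x _ (hconv x hx))
  have hMp : IsProbabilityMeasure M := by rw [← hνM]; infer_instance
  let q : ∀ n, Fin (k n) → ℝ → ℝ := fun n i => qf (1 - (k n:ℝ)⁻¹) (κ0 n) (((k n:ℝ) * κ0 n)⁻¹) (g n i)
  have hq : ∀ n i, GoodQ (q n i) := fun n i => (hG n i).goodQ (k n) (hk2 n) (κ0 n) (κpos n) (κle n)
  have hQ : ∀ n (i : Fin (k n)), Qmix unif (sigM h κ rzero n i) (ε n i) = qm (q n i) := fun n i =>
    Qmix_eq (k n) (hk2 n) h κ ε n i (κ0 n) (hκ n i) (κpos n) (hε n i) (g n i) (hG n i) (hg n i)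
  have eP : lawPV_P h κ rzero ε k = fun n => (PR (q n) (hq n) : Measure ℝ).map (fun x : ℝ => (x : EReal)) :=
    funext fun n => weakLim_P h κ ε k q hq hQ n
  have eQ : lawPV_Q h κ rzero ε k = fun n => (QR (q n) (hq n) : Measure ℝ).map (fun x : ℝ => (x : EReal)) :=
    funext fun n => weakLim_Q h κ ε k q hq hQ n
  rw [eP, eQ]
  have cP : ∀ (t : ℝ) (J : ℂ), Tendsto (fun n => ∫ x, Fa (fun s => Complex.exp (t * Real.log s * Complex.I) - 1)
      (((k n:ℝ) * κ0 n)⁻¹) x ∂(Mbar (fun i : Fin (k n) => g n i))) atTop (𝓝 J) →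
      Tendsto (fun n => charFun (PR (q n) (hq n) : Measure ℝ) t) atTop (𝓝 (Complex.exp (-(t * Complex.I) + J))) := by
    intro t J hJ
    simp only [charFun_PR]
    exact (goodW1 t).prod_lim k hk2 hk (fun n i => g n i) (fun n i => hG n i) κ0 κpos κle κlim J hJ
  have cQ : ∀ (t : ℝ) (J : ℂ), Tendsto (fun n => ∫ x, Fa (fun s => (s:ℂ) * (Complex.exp (t * Real.log s * Complex.I) - 1))
      (((k n:ℝ) * κ0 n)⁻¹) x ∂(Mbar (fun i : Fin (k n) => g n i))) atTop (𝓝 J) →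
      Tendsto (fun n => charFun (QR (q n) (hq n) : Measure ℝ) t) atTop (𝓝 (Complex.exp (-(t * Complex.I) + J))) := by
    intro t J hJ
    simp only [charFun_QR]
    exact (goodW2 t).prod_lim k hk2 hk (fun n i => g n i) (fun n i => hG n i) κ0 κpos κle κlim J hJ
  have hdir : ∀ c : ℝ, (Measure.dirac c).map (fun x : ℝ => (x : EReal)) = Measure.dirac (c : EReal) := fun c =>
    Measure.map_dirac' measurable_coe_real_ereal c
  simp only [ha] at cP cQ
  have hapos : ∀ n, 0 < (k n : ℝ) ^ (rr - 1) := fun n => Real.rpow_pos_of_pos (hkpos n) _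
  refine ⟨fun hr => ?_, fun hr => ?_, fun hr => ?_⟩
  · have ha0 : Tendsto (fun n => (k n : ℝ) ^ (rr - 1)) atTop (𝓝 0) := by
      have := (tendsto_rpow_neg_atTop (y := 1 - rr) (by linarith)).comp hkR
      simpa [Function.comp_def] using this
    have hlim : ∀ t : ℝ, Tendsto (fun n => charFun (PR (q n) (hq n) : Measure ℝ) t) atTop
        (𝓝 (Complex.exp ((0:ℝ) * t * Complex.I))) := by
      intro t
      have := cP t _ ((goodW1 t).lim_a _ (fun n => (hapos n).le) ha0 _ _ hν)
      simpa using this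
    obtain ⟨ρ, hρ, hρt⟩ := tendsto_dirac _ 0 hlim
    refine ⟨?_, ?_⟩
    · have := weakLim_coe _ _ hρt
      rwa [hρ, hdir] at this
    · have := contig _ (fun n => QR (q n) (hq n)) (fun n => QR_eq _ _) 0 le_rfl ρ hρ hρt
      simpa using this
  · have ha1 : ∀ n, (k n : ℝ) ^ (rr - 1) = 1 := fun n => by rw [hr]; simp
    simp only [ha1] at cP cQ
    have limP := fun t : ℝ => cP t _ ((goodW1 t).lim_b _ _ hν)
    have limQ := fun t : ℝ => cQ t _ ((goodW2 t).lim_b _ _ hν)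
    rw [hνM] at limP limQ
    obtain ⟨γ1, γ2, hγ1, hγ2, hl1, hl2⟩ := levy_both M hM0
    have contP := levy_cont M hM0 (fun x => (Real.exp x - 1)⁻¹)
      (fun t => Fa (fun s => Complex.exp (t * Real.log s * Complex.I) - 1) 1) (fun t x hx => Fa1 t x hx)
      (fun t => (goodW1 t).continuous_Fa zero_le_one) (fun t x => ((goodW1 t).norm_Fa zero_le_one x).trans (by linarith))
    have contQ := levy_cont M hM0 (fun x => Real.exp x / (Real.exp x - 1))
      (fun t => Fa (fun s => (s:ℂ) * (Complex.exp (t * Real.log s * Complex.I) - 1)) 1) (fun t x hx => Fa2 t x hx)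
      (fun t => (goodW2 t).continuous_Fa zero_le_one)
      (fun t x => ((goodW2 t).norm_Fa zero_le_one x).trans (by linarith [abs_nonneg t]))
    obtain ⟨ν1, h1, t1⟩ := exists_of_charFun _ _ contP limP
    obtain ⟨ν2, h2, t2⟩ := exists_of_charFun _ _ contQ limQ
    have conv : ∀ (ρ : Measure ℝ) (t : ℝ), (∫ x : ℝ, Complex.exp (Complex.I * (t : ℂ) * (x : ℂ)) ∂ρ) = charFun ρ t := by
      intro ρ t
      rw [charFun_apply_real]
      refine integral_congr_ae (ae_of_all _ fun x => ?_)
      simp only; congr 1; ring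
    refine ⟨ν1, ν2, γ1, γ2, inferInstance, inferInstance, ⟨?_, fun t => ?_⟩, ⟨?_, fun t => ?_⟩, hγ1, hγ2,
      weakLim_coe _ _ t1, weakLim_coe _ _ t2⟩
    · exact levy_isLevy M hM0 _ (by fun_prop) (fun x hx => (v1_facts x hx).1) (fun x hx => (v1_facts x hx).2.1)
    · rw [conv, h1, hl1]
    · exact levy_isLevy M hM0 _ (by fun_prop) (fun x hx => (v1_facts x hx).2.2.1) (fun x hx => (v1_facts x hx).2.2.2)
    · rw [conv, h2, hl2]
  · have ha0 : Tendsto (fun n => (k n : ℝ) ^ (rr - 1)) atTop atTop :=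
      (tendsto_rpow_atTop (y := rr - 1) (by linarith)).comp hkR
    have hlim : ∀ t : ℝ, Tendsto (fun n => charFun (PR (q n) (hq n) : Measure ℝ) t) atTop
        (𝓝 (Complex.exp ((-1:ℝ) * t * Complex.I))) := by
      intro t
      have := cP t _ ((goodW1 t).lim_c 2 (fun s => (norm_sub_le _ _).trans (by rw [normE']; norm_num)) _ hapos ha0 k hk2
        (fun n i => g n i) (fun n i => hG n i))
      simpa using this
    obtain ⟨ρ, hρ, hρt⟩ := tendsto_dirac _ (-1) hlim
    refine ⟨?_, ?_⟩
    · have := weakLim_coe _ _ hρt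
      rwa [hρ, hdir] at this
    · exact contig _ (fun n => QR (q n) (hq n)) (fun n => QR_eq _ _) (-1) (by norm_num) ρ hρ hρt


lemma WeakLim.of_shift {β : Type*} [MeasurableSpace β] [TopologicalSpace β]
    {μs : ℕ → Measure β} {ν : Measure β} (N : ℕ) (h : WeakLim (fun n => μs (n + N)) ν) : WeakLim μs ν := by
  intro f
  exact (tendsto_add_atTop_iff_nat (f := fun n => ∫ x, f x ∂(μs n)) N).1 (h f)

/-- extreme case `β = 1` in the nonparametric p-value model. -/
theorem statement12
    (k : ℕ → ℕ) (h : ℕ → ℕ → ℝ → ℝ) (κ : ℕ → ℕ → ℝ) (ε : ℕ → ℕ → ℝ)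
    (rr : ℝ) (D : Set ℝ) (M : Measure ℝ)
    (hk : Tendsto k atTop atTop)
    (hrr : 0 < rr)
    (hκ : ∀ n i, κ n i = (k n : ℝ) ^ (-rr))
    (hε : ∀ n i, ε n i = ((k n : ℝ))⁻¹)
    (hh : ∀ n i, (∀ x ∈ Set.Ioo (0 : ℝ) 1, 0 ≤ h n i x) ∧
      (∫ x in Set.Ioo (0 : ℝ) 1, h n i x) = 1)
    -- D dense in (0,∞), M a measure on (0,∞] with no mass at ∞
    (hD : D ⊆ Set.Ioi 0) (hDdense : Set.Ioi (0 : ℝ) ⊆ closure D)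
    (hM0 : M (Set.Iic 0) = 0)
    (hMfin : ∀ x ∈ D, M (Set.Ioi x) ≠ ⊤)
    (hconv : ∀ x ∈ D, Tendsto (fun n => ⨆ i : Fin (k n),
      |(∫ t in Set.Ioo (0 : ℝ) 1,
          h n i t * (if Real.exp x - 1 < h n i t then (1 : ℝ) else 0)) -
        (M (Set.Ioi x)).toReal|) atTop (nhds 0)) :
    -- (a) undetectable case: ξ1 ≡ ξ2 ≡ 0
    (rr < 1 →
      WeakLim (lawPV_P h κ rzero ε k) (Measure.dirac ((0 : ℝ) : EReal)) ∧
      WeakLim (lawPV_Q h κ rzero ε k) (Measure.dirac ((0 : ℝ) : EReal))) ∧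
    -- (b) r = 1: infinitely divisible limits with triplets (γ_j, 0, η_j)
    (rr = 1 →
      ∃ (ν1 ν2 : Measure ℝ) (γ1 γ2 : ℝ),
        IsProbabilityMeasure ν1 ∧ IsProbabilityMeasure ν2 ∧
        HasLevyTriplet ν1 γ1 0
          (M.withDensity (fun x => ENNReal.ofReal ((Real.exp x - 1)⁻¹))) ∧
        HasLevyTriplet ν2 γ2 0
          (M.withDensity (fun x => ENNReal.ofReal (Real.exp x / (Real.exp x - 1)))) ∧
        (0 : ℝ) = γ1 - (∫ x in Set.Ioi (0 : ℝ), (1 - Real.exp x + x / (1 + x ^ 2))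
            ∂(M.withDensity (fun x => ENNReal.ofReal ((Real.exp x - 1)⁻¹)))) ∧
        γ2 = γ1 + (∫ x in Set.Ioi (0 : ℝ), ((Real.exp x - 1) * (x / (1 + x ^ 2)))
            ∂(M.withDensity (fun x => ENNReal.ofReal ((Real.exp x - 1)⁻¹)))) ∧
        WeakLim (lawPV_P h κ rzero ε k) (ν1.map (fun x : ℝ => (x : EReal))) ∧
        WeakLim (lawPV_Q h κ rzero ε k) (ν2.map (fun x : ℝ => (x : EReal)))) ∧
    -- (c) r > 1: ξ1 ≡ −1 and ξ2 ∼ e⁻¹ δ₋₁ + (1−e⁻¹) δ₊∞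
    (1 < rr →
      WeakLim (lawPV_P h κ rzero ε k) (Measure.dirac ((-1 : ℝ) : EReal)) ∧
      WeakLim (lawPV_Q h κ rzero ε k)
        ((ENNReal.ofReal (Real.exp (-1))) • Measure.dirac ((-1 : ℝ) : EReal) +
          (ENNReal.ofReal (1 - Real.exp (-1))) • Measure.dirac (⊤ : EReal))) := by
  obtain ⟨N, hN⟩ := eventually_atTop.1 (hk.eventually_ge_atTop 2)
  have hshift : Tendsto (fun n => n + N) atTop atTop := tendsto_add_atTop_nat N
  obtain ⟨ca, cb, cc⟩ := core (fun n => k (n + N)) (fun n => h (n + N)) (fun n => κ (n + N)) (fun n => ε (n + N))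
    rr D M (fun n => hN _ (Nat.le_add_left N n)) (hk.comp hshift) hrr (fun n i => hκ _ i) (fun n i => hε _ i)
    (fun n i => hh _ i) hD hDdense hM0 hMfin (fun x hx => (hconv x hx).comp hshift)
  refine ⟨fun hr => ?_, fun hr => ?_, fun hr => ?_⟩
  · obtain ⟨h1, h2⟩ := ca hr
    exact ⟨WeakLim.of_shift N h1, WeakLim.of_shift N h2⟩
  · obtain ⟨ν1, ν2, γ1, γ2, h1, h2, h3, h4, h5, h6, h7, h8⟩ := cb hr
    exact ⟨ν1, ν2, γ1, γ2, h1, h2, h3, h4, h5, h6, WeakLim.of_shift N h7, WeakLim.of_shift N h8⟩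
  · obtain ⟨h1, h2⟩ := cc hr
    exact ⟨WeakLim.of_shift N h1, WeakLim.of_shift N h2⟩


end
end

section
/- In the heteroscedastic normal mixture model with ε_n = n^{−1} and ϑ_n = √(2 r log n): (i) if r < 1, the model is undetectable, i.e. ‖P_(n) − Q_(n)‖ → 0; (ii) if r = 1, then T_n converges in distribution to the constant −1/2 under P_(n), and under Q_(n) the law of T_n converges weakly (on [−∞,∞]) to e^{−1/2}·δ_{−1/2} + (1 − e^{−1/2})·δ_{+∞}; (iii) if r > 1, then T_n converges in distribution to the constant −1 under P_(n), and under Q_(n) the law of T_n converges weakly to e^{−1}·δ_{−1} + (1 − e^{−1})·δ_{+∞}. -/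
open MeasureTheory Filter Topology ProbabilityTheory

noncomputable section

/-- Signal strength `ϑ_n = √(2 r log n)`. -/
def thetaN (r : ℝ) (n : ℕ) : ℝ := Real.sqrt (2 * r * Real.log n)

/-- The single-coordinate alternative
`Q_{n,i} = (1 − n⁻¹)·N(0,1) + n⁻¹·N(ϑ_n, σ₀²)`. -/
def QoneN (r σ0 : ℝ) (n : ℕ) : Measure ℝ :=
  Qmix (gaussianReal 0 1) (gaussianReal (thetaN r n) ⟨σ0 ^ 2, sq_nonneg σ0⟩) ((n : ℝ))⁻¹

/-- The null product measure `P_(n) = ⊗_{i<n} N(0,1)`. -/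
def PprodN (n : ℕ) : Measure (Fin n → ℝ) :=
  Measure.pi (fun _ => gaussianReal 0 1)

/-- The alternative product measure. -/
def QprodN (r σ0 : ℝ) (n : ℕ) : Measure (Fin n → ℝ) :=
  Measure.pi (fun _ => QoneN r σ0 n)

/-- The log-likelihood ratio statistic `T_n`. -/
def TstatN (r σ0 : ℝ) (n : ℕ) (y : Fin n → ℝ) : EReal :=
  ∑ i : Fin n, ENNReal.log (elr (QoneN r σ0 n) (gaussianReal 0 1) (y i))

theorem pi_withDensity_aux {n : ℕ} (P : Measure ℝ) [IsProbabilityMeasure P] (q : ℝ → ENNReal)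
    (hq : Measurable q) [SigmaFinite (P.withDensity q)] :
    (Measure.pi (fun _ : Fin n => P)).withDensity (fun y => ∏ i, q (y i)) =
      Measure.pi (fun _ : Fin n => P.withDensity q) := by
  refine Measure.pi_eq (μ := fun _ : Fin n => P.withDensity q) (fun s hs => ?_) |>.symm
  rw [withDensity_apply _ (MeasurableSet.univ_pi hs), ← lintegral_indicator (MeasurableSet.univ_pi hs)]
  have h1 : ∀ y : Fin n → ℝ, (Set.univ.pi s).indicator (fun y => ∏ i, q (y i)) y
      = ∏ i, (s i).indicator q (y i) := by
    intro y
    by_cases hy : y ∈ Set.univ.pi s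
    · rw [Set.indicator_of_mem hy]
      refine Finset.prod_congr rfl fun i _ => ?_
      rw [Set.indicator_of_mem (hy i (Set.mem_univ i))]
    · rw [Set.indicator_of_notMem hy]
      simp only [Set.mem_pi, Set.mem_univ, true_imp_iff, not_forall] at hy
      obtain ⟨i, hi⟩ := hy
      exact (Finset.prod_eq_zero (Finset.mem_univ i) (Set.indicator_of_notMem hi _)).symm
  simp_rw [h1]
  have hm : ∀ i, Measurable ((s i).indicator q) := fun i => hq.indicator (hs i)
  have hind : iIndepFun (fun (i : Fin n) (y : Fin n → ℝ) => (s i).indicator q (y i))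
      (Measure.pi (fun _ : Fin n => P)) :=
    iIndepFun_pi (μ := fun _ : Fin n => P) (X := fun i => (s i).indicator q)
      (fun i => (hm i).aemeasurable)
  have h2 := lintegral_prod_eq_prod_lintegral_of_indepFun Finset.univ
    (fun (i : Fin n) (y : Fin n → ℝ) => (s i).indicator q (y i)) hind
    (fun i => (hm i).comp (measurable_pi_apply i))
  rw [h2]
  refine Finset.prod_congr rfl fun i _ => ?_
  rw [withDensity_apply _ (hs i), ← lintegral_indicator (hs i)]
  exact (measurePreserving_eval (fun _ : Fin n => P) i).lintegral_comp (hm i)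

/-- General truncation lemma: convergence in probability implies convergence of expectations of
functions of sublinear growth. -/
theorem tendsto_integral_sublinear {Ω : ℕ → Type*} [∀ n, MeasurableSpace (Ω n)]
    (P : ∀ n, Measure (Ω n)) [∀ n, IsProbabilityMeasure (P n)] (R : ∀ n, Ω n → ℝ)
    (hR0 : ∀ᶠ n in atTop, ∀ y, 0 ≤ R n y) (hRm : ∀ n, Measurable (R n))
    (hRi : ∀ᶠ n in atTop, Integrable (R n) (P n) ∧ ∫ y, R n y ∂(P n) = 1)
    (c : ℝ)
    (hc : ∀ δ > 0, Tendsto (fun n => (P n).real {y | δ ≤ |R n y - c|}) atTop (𝓝 0))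
    (G : ℝ → ℝ) (hGm : Measurable G) (hGc : ContinuousAt G c)
    (hG : ∀ ε > 0, ∃ C, ∀ x, 0 ≤ x → |G x| ≤ C + ε * x) :
    Tendsto (fun n => ∫ y, G (R n y) ∂(P n)) atTop (𝓝 (G c)) := by
  rw [Metric.tendsto_atTop']
  intro e he
  obtain ⟨C, hC⟩ := hG (e / 4) (by positivity)
  obtain ⟨δ, hδ, hδc⟩ := Metric.continuousAt_iff.1 hGc (e / 4) (by positivity)
  have hCn : 0 ≤ C := by have := hC 0 le_rfl; simp at this; exact (abs_nonneg _).trans this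
  have h3 : ∀ᶠ n in atTop, (P n).real {y | δ ≤ |R n y - c|} * (C + |G c|) < e / 4 := by
    have := (hc δ hδ).mul_const (C + |G c|)
    rw [zero_mul] at this
    exact this.eventually (gt_mem_nhds (by positivity))
  obtain ⟨N, hN⟩ := eventually_atTop.1 (hR0.and (hRi.and h3))
  refine ⟨N, fun n hn => ?_⟩
  obtain ⟨h0, ⟨hi, h1⟩, hs⟩ := hN n hn.le
  set A : Set (Ω n) := {y | δ ≤ |R n y - c|} with hA
  have hAm : MeasurableSet A := measurableSet_le measurable_const (by have := hRm n; fun_prop)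
  have hGi : Integrable (fun y => G (R n y)) (P n) := by
    refine Integrable.mono' ((integrable_const C).add (hi.const_mul (e/4)))
      ((hGm.comp (hRm n)).aestronglyMeasurable) (ae_of_all _ fun y => ?_)
    simpa using hC _ (h0 y)
  have hb : ∀ y, |G (R n y) - G c| ≤ e / 4 + A.indicator (fun _ => C + |G c|) y + e / 4 * R n y := by
    intro y
    by_cases hy : y ∈ A
    · rw [Set.indicator_of_mem hy]
      have := hC _ (h0 y)
      have h5 := abs_sub (G (R n y)) (G c)
      linarith
    · rw [Set.indicator_of_notMem hy]
      have h6 : dist (R n y) c < δ := by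
        simp only [hA, Set.mem_ofPred_eq, not_le] at hy
        rwa [Real.dist_eq]
      have := hδc h6
      rw [Real.dist_eq] at this
      have := mul_nonneg (by positivity : 0 ≤ e/4) (h0 y)
      linarith
  have hint : Integrable (fun y => A.indicator (fun _ => C + |G c|) y) (P n) :=
    (integrable_const _).indicator hAm
  rw [Real.dist_eq]
  have h7 : ∫ y, G (R n y) ∂(P n) - G c = ∫ y, (G (R n y) - G c) ∂(P n) := by
    rw [integral_sub hGi (integrable_const _)]; simp
  rw [h7]
  calc |∫ y, (G (R n y) - G c) ∂(P n)| ≤ ∫ y, |G (R n y) - G c| ∂(P n) := abs_integral_le_integral_abs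
    _ ≤ ∫ y, (e / 4 + A.indicator (fun _ => C + |G c|) y + e / 4 * R n y) ∂(P n) :=
        integral_mono (hGi.sub (integrable_const _)).abs
          (((integrable_const _).add hint).add (hi.const_mul _)) hb
    _ = e / 4 + (P n).real A * (C + |G c|) + e / 4 := by
        rw [integral_add ((integrable_const _).fun_add hint) (hi.const_mul _),
          integral_add (integrable_const _) hint, integral_indicator_const _ hAm,
          integral_const_mul, h1]
        simp
    _ < e := by linarith

/-- Truncated second moment argument for the likelihood ratio product. -/
theorem product_tendsto_in_measure (P : Measure ℝ) [IsProbabilityMeasure P] (h : ℕ → ℝ → ℝ)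
    (hm : ∀ n, Measurable (h n)) (h0 : ∀ n x, 0 ≤ h n x) (p : ℝ)
    (H1 : Tendsto (fun n : ℕ => n * ∫ x, {x | h n x ≤ 1}.indicator (h n) x ∂P) atTop (𝓝 (1 - p)))
    (H2 : Tendsto (fun n : ℕ => n * ∫ x, ({x | h n x ≤ 1}.indicator (h n) x) ^ 2 ∂P) atTop (𝓝 0))
    (H3 : Tendsto (fun n : ℕ => n * P.real {x | 1 < h n x}) atTop (𝓝 0)) (δ : ℝ) (hδ : 0 < δ) :
    Tendsto (fun n : ℕ => (Measure.pi (fun _ : Fin n => P)).real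
      {y | δ ≤ |∏ i, (1 - (n : ℝ)⁻¹ + h n (y i)) - Real.exp (-p)|}) atTop (𝓝 0) := by
  set k : ℕ → ℝ → ℝ := fun n => {x | h n x ≤ 1}.indicator (h n) with hk
  have hkm : ∀ n, Measurable (k n) := fun n =>
    (hm n).indicator (measurableSet_le (hm n) measurable_const)
  have hkb : ∀ n x, |k n x| ≤ 1 := by
    intro n x
    by_cases hx : h n x ≤ 1
    · simp only [hk, Set.indicator, Set.mem_ofPred_eq, hx, if_true]
      rwa [abs_of_nonneg (h0 n x)]
    · simp [hk, hx]
  have hki : ∀ n, Integrable (k n) P := fun n =>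
    Integrable.of_bound (hkm n).aestronglyMeasurable 1 (ae_of_all _ (hkb n))
  have hki2 : ∀ n, Integrable (fun x => k n x ^ 2) P := fun n =>
    Integrable.of_bound ((hkm n).pow_const 2).aestronglyMeasurable 1 (ae_of_all _ fun x => by
      rw [Real.norm_eq_abs, abs_pow]; exact pow_le_one₀ (abs_nonneg _) (hkb n x))
  set q : ℕ → ℝ → ℝ := fun n x => 1 - (n : ℝ)⁻¹ + k n x with hq
  have hqm : ∀ n, Measurable (q n) := fun n => (hkm n).const_add _
  set R : ∀ n : ℕ, (Fin n → ℝ) → ℝ := fun n y => ∏ i, q n (y i) with hR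
  have hqb : ∀ n x, |q n x| ≤ 2 := by
    intro n x
    have h1 := hkb n x
    rw [abs_le] at h1 ⊢
    have h2 : (n:ℝ)⁻¹ ≤ 1 := Nat.cast_inv_le_one n
    have h3 : 0 ≤ (n:ℝ)⁻¹ := by positivity
    constructor <;> simp only [hq] <;> linarith
  have hRm : ∀ n, Measurable (R n) := fun n =>
    Finset.measurable_prod _ fun i _ => (hqm n).comp (measurable_pi_apply i)
  have hRb : ∀ n y, |R n y| ≤ 2 ^ n := by
    intro n y
    rw [hR, Finset.abs_prod]
    calc ∏ i, |q n (y i)| ≤ ∏ _i : Fin n, (2:ℝ) :=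
          Finset.prod_le_prod (fun _ _ => abs_nonneg _) (fun i _ => hqb n _)
      _ = 2 ^ n := by simp
  have hRi : ∀ n, Integrable (R n) (Measure.pi (fun _ : Fin n => P)) := fun n =>
    Integrable.of_bound (hRm n).aestronglyMeasurable (2^n) (ae_of_all _ (hRb n))
  have hRi2 : ∀ n, Integrable (fun y => R n y ^ 2) (Measure.pi (fun _ : Fin n => P)) := fun n =>
    Integrable.of_bound ((hRm n).pow_const 2).aestronglyMeasurable ((2^n)^2)
      (ae_of_all _ fun y => by
        rw [Real.norm_eq_abs, abs_pow]; exact pow_le_pow_left₀ (abs_nonneg _) (hRb n y) 2)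
  have E1 : ∀ n, ∫ y, R n y ∂(Measure.pi (fun _ : Fin n => P))
      = (1 + (∫ x, k n x ∂P - (n:ℝ)⁻¹)) ^ n := by
    intro n
    simp only [hR]
    rw [integral_fintype_prod_eq_pow (q n), Fintype.card_fin]
    congr 1
    simp only [hq]
    rw [integral_add (integrable_const _) (hki n)]
    simp; ring
  have E2 : ∀ n, ∫ y, R n y ^ 2 ∂(Measure.pi (fun _ : Fin n => P))
      = (1 + ((1 - (n:ℝ)⁻¹) ^ 2 - 1 + 2 * (1 - (n:ℝ)⁻¹) * ∫ x, k n x ∂P + ∫ x, k n x ^ 2 ∂P)) ^ n := by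
    intro n
    simp only [hR, ← Finset.prod_pow]
    rw [integral_fintype_prod_eq_pow (fun x => q n x ^ 2), Fintype.card_fin]
    congr 1
    have : ∀ x, q n x ^ 2 = (1 - (n:ℝ)⁻¹) ^ 2 + 2 * (1 - (n:ℝ)⁻¹) * k n x + k n x ^ 2 := by
      intro x; simp only [hq]; ring
    simp_rw [this]
    rw [integral_add ((integrable_const _).fun_add ((hki n).const_mul _)) (hki2 n),
      integral_add (integrable_const _) ((hki n).const_mul _), integral_const_mul]
    simp; ring
  have hinv : Tendsto (fun n : ℕ => (n:ℝ)⁻¹) atTop (𝓝 0) := tendsto_inv_atTop_nhds_zero_nat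
  have T1 : Tendsto (fun n => ∫ y, R n y ∂(Measure.pi (fun _ : Fin n => P))) atTop
      (𝓝 (Real.exp (-p))) := by
    simp_rw [E1]
    refine Real.tendsto_one_add_pow_exp_of_tendsto ?_
    have := H1.sub_const 1
    rw [show (1 - p - 1) = -p by ring] at this
    refine this.congr' ?_
    filter_upwards [eventually_gt_atTop 0] with n hn
    have : (n:ℝ) ≠ 0 := by positivity
    rw [mul_sub, mul_inv_cancel₀ this]
  have T2 : Tendsto (fun n => ∫ y, R n y ^ 2 ∂(Measure.pi (fun _ : Fin n => P))) atTop
      (𝓝 (Real.exp (-p) ^ 2)) := by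
    simp_rw [E2]
    rw [← Real.exp_nat_mul]
    refine Real.tendsto_one_add_pow_exp_of_tendsto ?_
    have h1 : Tendsto (fun n : ℕ => (-2 + (n:ℝ)⁻¹) + 2 * (1 - (n:ℝ)⁻¹) * (n * ∫ x, k n x ∂P)
       + n * ∫ x, k n x ^ 2 ∂P) atTop (𝓝 ((-2 + 0) + 2 * (1 - 0) * (1 - p) + 0)) :=
      ((hinv.const_add _).add (((hinv.const_sub 1).const_mul 2).mul H1)).add H2
    rw [show ((-2 + 0) + 2 * (1 - 0) * (1 - p) + 0) = ((2:ℕ):ℝ) * -p by push_cast; ring] at h1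
    refine h1.congr' ?_
    filter_upwards [eventually_gt_atTop 0] with n hn
    have : (n:ℝ) ≠ 0 := by positivity
    field_simp
    ring
  have T3 : Tendsto (fun n => ∫ y, (R n y - Real.exp (-p)) ^ 2 ∂(Measure.pi (fun _ : Fin n => P)))
      atTop (𝓝 0) := by
    have h1 := (T2.sub (T1.const_mul (2 * Real.exp (-p)))).add_const (Real.exp (-p) ^ 2)
    rw [show Real.exp (-p) ^ 2 - 2 * Real.exp (-p) * Real.exp (-p) + Real.exp (-p) ^ 2 = 0 by ring] at h1
    refine h1.congr fun n => ?_
    have : ∀ y, (R n y - Real.exp (-p)) ^ 2 =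
      R n y ^ 2 - (2 * Real.exp (-p)) * R n y + Real.exp (-p) ^ 2 := fun y => by ring
    simp_rw [this]
    have hs' : Integrable (fun y => R n y ^ 2 - (2 * Real.exp (-p)) * R n y)
        (Measure.pi (fun _ : Fin n => P)) := (hRi2 n).sub ((hRi n).const_mul _)
    rw [integral_add hs' (integrable_const _),
      integral_sub (hRi2 n) ((hRi n).const_mul _), integral_const_mul]
    simp
  have T4 : Tendsto (fun n : ℕ => n * P.real {x | 1 < h n x} +
      (∫ y, (R n y - Real.exp (-p)) ^ 2 ∂(Measure.pi (fun _ : Fin n => P))) / δ ^ 2) atTop (𝓝 0) := by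
    simpa using H3.add (T3.div_const (δ ^ 2))
  refine squeeze_zero (fun n => measureReal_nonneg) (fun n => ?_) T4
  have hsub : {y : Fin n → ℝ | δ ≤ |∏ i, (1 - (n : ℝ)⁻¹ + h n (y i)) - Real.exp (-p)|} ⊆
      (⋃ i, (Function.eval i) ⁻¹' {x | 1 < h n x}) ∪ {y | δ ^ 2 ≤ (R n y - Real.exp (-p)) ^ 2} := by
    intro y hy
    by_cases hex : ∃ i, 1 < h n (y i)
    · left
      obtain ⟨i, hi⟩ := hex
      exact Set.mem_iUnion.2 ⟨i, hi⟩
    · right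
      push Not at hex
      have : R n y = ∏ i, (1 - (n : ℝ)⁻¹ + h n (y i)) := by
        refine Finset.prod_congr rfl fun i _ => ?_
        simp [hq, hk, Set.indicator, hex i]
      simp only [Set.mem_ofPred_eq] at hy ⊢
      rw [this, ← sq_abs (_ - _)]
      exact pow_le_pow_left₀ hδ.le hy 2
  refine (measureReal_mono hsub).trans ((measureReal_union_le _ _).trans (add_le_add ?_ ?_))
  · refine (measureReal_iUnion_fintype_le _).trans ?_
    have : ∀ i : Fin n, (Measure.pi (fun _ : Fin n => P)).real (Function.eval i ⁻¹' {x | 1 < h n x})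
        = P.real {x | 1 < h n x} := fun i => by
      simp only [measureReal_def]
      rw [(measurePreserving_eval (fun _ : Fin n => P) i).measure_preimage
        (measurableSet_lt measurable_const (hm n)).nullMeasurableSet]
    rw [Finset.sum_congr rfl fun i _ => this i]
    simp
  · rw [le_div_iff₀ (by positivity), mul_comm]
    refine mul_meas_ge_le_integral_of_nonneg (ae_of_all _ fun y => sq_nonneg _) ?_ _
    have : ∀ y, (R n y - Real.exp (-p)) ^ 2 =
      R n y ^ 2 - (2 * Real.exp (-p)) * R n y + Real.exp (-p) ^ 2 := fun y => by ring
    simp_rw [this]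
    exact ((hRi2 n).sub ((hRi n).const_mul _)).add (integrable_const _)

theorem ratio_meas (m : ℝ) (v : NNReal) : Measurable
    (fun x => ENNReal.ofReal (gaussianPDFReal m v x / gaussianPDFReal 0 1 x)) :=
  ((measurable_gaussianPDFReal _ _).div (measurable_gaussianPDFReal _ _)).ennreal_ofReal

theorem QoneN_def (r σ0 : ℝ) (n : ℕ) : QoneN r σ0 n =
    (ENNReal.ofReal (1 - (n:ℝ)⁻¹)) • gaussianReal 0 1 +
    (ENNReal.ofReal (n:ℝ)⁻¹) • gaussianReal (thetaN r n) (NNReal.mk (σ0 ^ 2) (sq_nonneg σ0)) := rfl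

/-- `hN = n⁻¹ · dN(ϑ_n,σ₀²)/dN(0,1)`. -/
def hN (r σ0 : ℝ) (n : ℕ) (x : ℝ) : ℝ :=
  (n : ℝ)⁻¹ * (gaussianPDFReal (thetaN r n) (NNReal.mk (σ0 ^ 2) (sq_nonneg σ0)) x / gaussianPDFReal 0 1 x)

theorem hN_measurable (r σ0 : ℝ) (n : ℕ) : Measurable (hN r σ0 n) :=
  ((measurable_gaussianPDFReal _ _).div (measurable_gaussianPDFReal _ _)).const_mul _

theorem hN_nonneg (r σ0 : ℝ) (n : ℕ) (x : ℝ) : 0 ≤ hN r σ0 n x :=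
  mul_nonneg (by positivity) (div_nonneg (gaussianPDFReal_nonneg _ _ _) (gaussianPDFReal_nonneg _ _ _))

theorem var_ne (σ0 : ℝ) (hσ0 : 0 < σ0) : NNReal.mk (σ0 ^ 2) (sq_nonneg σ0) ≠ 0 := by
  intro h
  have : σ0 ^ 2 = 0 := congrArg NNReal.toReal h
  have : 0 < σ0 ^ 2 := by positivity
  linarith

theorem hN_pos (r σ0 : ℝ) (hσ0 : 0 < σ0) (n : ℕ) (hn : 0 < n) (x : ℝ) : 0 < hN r σ0 n x :=
  mul_pos (by positivity) (div_pos (gaussianPDFReal_pos _ _ _ (var_ne σ0 hσ0))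
    (gaussianPDFReal_pos _ _ _ one_ne_zero))

theorem gaussian_eq_withDensity (m : ℝ) (v : NNReal) (hv : v ≠ 0) :
    gaussianReal m v = (gaussianReal 0 1).withDensity
      (fun x => ENNReal.ofReal (gaussianPDFReal m v x / gaussianPDFReal 0 1 x)) := by
  rw [gaussianReal_of_var_ne_zero m hv, gaussianReal_of_var_ne_zero 0 one_ne_zero,
    ← withDensity_mul _ (measurable_gaussianPDF _ _)
      (ratio_meas _ _)]
  congr 1
  ext x
  simp only [Pi.mul_apply, gaussianPDF]
  rw [← ENNReal.ofReal_mul (gaussianPDFReal_nonneg _ _ _),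
    mul_div_cancel₀ _ (gaussianPDFReal_pos 0 1 x one_ne_zero).ne']

theorem QoneN_eq_withDensity (r σ0 : ℝ) (hσ0 : 0 < σ0) (n : ℕ) :
    QoneN r σ0 n = (gaussianReal 0 1).withDensity
      (fun x => ENNReal.ofReal (1 - (n:ℝ)⁻¹ + hN r σ0 n x)) := by
  have h2 : (n:ℝ)⁻¹ ≤ 1 := Nat.cast_inv_le_one n
  have h3 : 0 ≤ (n:ℝ)⁻¹ := by positivity
  have e : (fun x => ENNReal.ofReal (1 - (n:ℝ)⁻¹ + hN r σ0 n x)) =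
      (fun _ => ENNReal.ofReal (1 - (n:ℝ)⁻¹)) + (ENNReal.ofReal (n:ℝ)⁻¹) •
        (fun x => ENNReal.ofReal (gaussianPDFReal (thetaN r n) (NNReal.mk (σ0 ^ 2) (sq_nonneg σ0)) x
          / gaussianPDFReal 0 1 x)) := by
    ext x
    rw [ENNReal.ofReal_add (by linarith) (hN_nonneg _ _ _ _), hN, ENNReal.ofReal_mul h3]
    rfl
  rw [e, withDensity_add_left measurable_const, withDensity_smul _
    (ratio_meas _ _),
    ← gaussian_eq_withDensity _ _ (var_ne σ0 hσ0), withDensity_const, QoneN_def]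

instance QoneN_prob (r σ0 : ℝ) (n : ℕ) : IsProbabilityMeasure (QoneN r σ0 n) := by
  have h2 : (n:ℝ)⁻¹ ≤ 1 := Nat.cast_inv_le_one n
  have h3 : 0 ≤ (n:ℝ)⁻¹ := by positivity
  constructor
  simp only [QoneN_def, Measure.add_apply, Measure.smul_apply, measure_univ, smul_eq_mul, mul_one]
  rw [← ENNReal.ofReal_add (by linarith) h3]
  simp

theorem integral_hN (r σ0 : ℝ) (hσ0 : 0 < σ0) (n : ℕ) (hn : 0 < n) (φ : ℝ → ℝ)
    (hφ : Measurable φ) :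
    n * ∫ x, hN r σ0 n x * φ (hN r σ0 n x) ∂(gaussianReal 0 1) =
      ∫ z, φ (hN r σ0 n (thetaN r n + σ0 * z)) ∂(gaussianReal 0 1) := by
  have hmap : (gaussianReal 0 1).map (fun z => thetaN r n + σ0 * z) =
      gaussianReal (thetaN r n) (NNReal.mk (σ0 ^ 2) (sq_nonneg σ0)) := by
    have h1 := gaussianReal_map_const_mul (μ := 0) (v := 1) σ0
    have h2 := gaussianReal_map_const_add (μ := σ0 * 0) (v := (NNReal.mk (σ0 ^ 2) (sq_nonneg σ0)) * 1) (thetaN r n)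
    rw [← h1, Measure.map_map (by fun_prop) (by fun_prop)] at h2
    rw [show (fun z => thetaN r n + σ0 * z) = (fun x => thetaN r n + x) ∘ (fun z => σ0 * z) from rfl, h2]
    simp
  have hm := hN_measurable r σ0 n
  rw [← integral_map (φ := fun z => thetaN r n + σ0 * z) (f := fun x => φ (hN r σ0 n x)) (by fun_prop)
    (hφ.comp hm).aestronglyMeasurable, hmap, gaussian_eq_withDensity _ _ (var_ne σ0 hσ0),
    integral_withDensity_eq_integral_toReal_smul
      (ratio_meas _ _)
      (ae_of_all _ fun x => ENNReal.ofReal_lt_top), ← integral_const_mul]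
  refine integral_congr_ae (ae_of_all _ fun x => ?_)
  simp only [smul_eq_mul]
  rw [ENNReal.toReal_ofReal (div_nonneg (gaussianPDFReal_nonneg _ _ _) (gaussianPDFReal_nonneg _ _ _)),
    ← mul_assoc]
  congr 1
  rw [hN, mul_inv_cancel_left₀ (by positivity)]

theorem hN_exp (r σ0 : ℝ) (hr : 0 < r) (hσ0 : 0 < σ0) (n : ℕ) (hn : 0 < n) (z : ℝ) :
    hN r σ0 n (thetaN r n + σ0 * z) = Real.exp ((r - 1) * √(Real.log n) ^ 2 +
      √(2 * r) * σ0 * z * √(Real.log n) + ((σ0 ^ 2 - 1) * z ^ 2 / 2 - Real.log σ0)) := by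
  have hl : 0 ≤ Real.log n := Real.log_natCast_nonneg n
  have hn' : (0:ℝ) < n := by positivity
  have ht : thetaN r n = √(2 * r) * √(Real.log n) := by
    rw [thetaN, Real.sqrt_mul (by positivity)]
  have hs := Real.sq_sqrt hl
  have h2r := Real.sq_sqrt (by positivity : 0 ≤ 2 * r)
  rw [hN, ht]
  set s := √(Real.log n)
  set t := √(2 * r)
  simp only [gaussianPDFReal, NNReal.coe_mk, NNReal.coe_one]
  have hpi : √(2 * Real.pi * σ0 ^ 2) = √(2 * Real.pi * 1) * σ0 := by
    rw [mul_one, Real.sqrt_mul (by positivity), Real.sqrt_sq hσ0.le]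
  rw [hpi]
  have hp : 0 < √(2 * Real.pi * 1) := by positivity
  have hE : (r - 1) * s ^ 2 + t * σ0 * z * s + ((σ0 ^ 2 - 1) * z ^ 2 / 2 - Real.log σ0)
     = -(t * s + σ0 * z - t * s) ^ 2 / (2 * σ0 ^ 2) - (-(t * s + σ0 * z - 0) ^ 2 / (2 * 1))
       - Real.log n - Real.log σ0 := by
    have h1 : -(t * s + σ0 * z - t * s) ^ 2 / (2 * σ0 ^ 2) = - z ^ 2 / 2 := by
      field_simp; ring
    rw [h1, ← hs]
    have : (t * s) ^ 2 = 2 * r * s ^ 2 := by rw [mul_pow, h2r]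
    linear_combination -this / 2
  rw [hE, Real.exp_sub, Real.exp_sub, Real.exp_sub, Real.exp_log hn', Real.exp_log hσ0]
  field_simp

theorem sqrt_log_tendsto : Tendsto (fun n : ℕ => √(Real.log n)) atTop atTop :=
  Real.tendsto_sqrt_atTop.comp (Real.tendsto_log_atTop.comp tendsto_natCast_atTop_atTop)

theorem quad_top (a b c : ℝ) (ha : 0 < a) :
    Tendsto (fun n : ℕ => a * √(Real.log n) ^ 2 + b * √(Real.log n) + c) atTop atTop := by
  have h1 : Tendsto (fun n : ℕ => √(Real.log n) * (a * √(Real.log n) + b) + c) atTop atTop :=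
    tendsto_atTop_add_const_right _ _ (sqrt_log_tendsto.atTop_mul_atTop₀
      (tendsto_atTop_add_const_right _ _ (sqrt_log_tendsto.const_mul_atTop ha)))
  exact h1.congr fun n => by ring

theorem lin_top (b c : ℝ) (ha : 0 < b) :
    Tendsto (fun n : ℕ => b * √(Real.log n) + c) atTop atTop :=
  tendsto_atTop_add_const_right _ _ (sqrt_log_tendsto.const_mul_atTop ha)

/-- Main abstract reduction: pointwise dichotomy of `hN` along the signal. -/
theorem LR_tendsto (r σ0 p : ℝ) (hσ0 : 0 < σ0) (B : Set ℝ)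
    (hB : MeasurableSet B) (hBp : (gaussianReal 0 1).real B = 1 - p)
    (hB0 : ∀ᵐ z ∂(gaussianReal 0 1), z ∈ B →
      Tendsto (fun n => hN r σ0 n (thetaN r n + σ0 * z)) atTop (𝓝 0))
    (hB1 : ∀ᵐ z ∂(gaussianReal 0 1), z ∉ B →
      Tendsto (fun n => hN r σ0 n (thetaN r n + σ0 * z)) atTop atTop)
    (δ : ℝ) (hδ : 0 < δ) :
    Tendsto (fun n : ℕ => (PprodN n).real
      {y | δ ≤ |∏ i, (1 - (n : ℝ)⁻¹ + hN r σ0 n (y i)) - Real.exp (-p)|}) atTop (𝓝 0) := by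
  have hmz : ∀ n, Measurable (fun z => hN r σ0 n (thetaN r n + σ0 * z)) := fun n =>
    (hN_measurable r σ0 n).comp (by fun_prop)
  -- general dominated convergence
  have key : ∀ (φ : ℝ → ℝ) (l : ℝ), Measurable φ → (∀ x, 0 ≤ x → |φ x| ≤ 1) →
      Tendsto φ (𝓝[≥] 0) (𝓝 l) → Tendsto φ atTop (𝓝 0) →
      Tendsto (fun n : ℕ => n * ∫ x, hN r σ0 n x * φ (hN r σ0 n x) ∂(gaussianReal 0 1)) atTop
        (𝓝 ((1 - p) * l)) := by
    intro φ l hφ hφb hφ0 hφ1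
    have h1 : Tendsto (fun n : ℕ => ∫ z, φ (hN r σ0 n (thetaN r n + σ0 * z)) ∂(gaussianReal 0 1)) atTop
        (𝓝 (∫ z, B.indicator (fun _ => l) z ∂(gaussianReal 0 1))) := by
      refine tendsto_integral_of_dominated_convergence (fun _ => 1)
        (fun n => (hφ.comp (hmz n)).aestronglyMeasurable) (integrable_const _)
        (fun n => ae_of_all _ fun z => hφb _ (hN_nonneg _ _ _ _)) ?_
      filter_upwards [hB0, hB1] with z h0 h1
      by_cases hz : z ∈ B
      · rw [Set.indicator_of_mem hz]
        exact hφ0.comp (tendsto_nhdsWithin_iff.2 ⟨h0 hz, Eventually.of_forall fun n => hN_nonneg _ _ _ _⟩)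
      · rw [Set.indicator_of_notMem hz]
        exact hφ1.comp (h1 hz)
    rw [integral_indicator_const _ hB, hBp, smul_eq_mul] at h1
    refine h1.congr' ?_
    filter_upwards [eventually_gt_atTop 0] with n hn
    exact (integral_hN r σ0 hσ0 n hn φ hφ).symm
  have hev0 : ∀ᶠ x : ℝ in 𝓝[≥] 0, x ≤ 1 :=
    nhdsWithin_le_nhds (eventually_le_nhds one_pos)
  have hid0 : Tendsto (fun x : ℝ => x) (𝓝[≥] 0) (𝓝 0) := nhdsWithin_le_nhds
  refine product_tendsto_in_measure (gaussianReal 0 1) (hN r σ0) (hN_measurable r σ0)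
    (hN_nonneg r σ0) p ?_ ?_ ?_ δ hδ
  · have := key (fun x => if x ≤ 1 then 1 else 0) 1
      (Measurable.ite measurableSet_Iic measurable_const measurable_const)
      (fun x hx => by split_ifs <;> simp)
      (tendsto_const_nhds.congr' (hev0.mono fun x hx => by simp [hx]))
      (tendsto_const_nhds.congr' ((eventually_gt_atTop 1).mono fun x hx => by simp [not_le.2 hx]))
    rw [mul_one] at this
    refine this.congr fun n => ?_
    congr 2
    ext x
    simp [Set.indicator]
  · have := key (fun x => if x ≤ 1 then x else 0) 0
      (Measurable.ite measurableSet_Iic measurable_id measurable_const)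
      (fun x hx => by
        split_ifs with h
        · rwa [abs_of_nonneg hx]
        · simp)
      (hid0.congr' (hev0.mono fun x hx => by simp [hx]))
      (tendsto_const_nhds.congr' ((eventually_gt_atTop 1).mono fun x hx => by simp [not_le.2 hx]))
    rw [mul_zero] at this
    refine this.congr fun n => ?_
    congr 2
    ext x
    by_cases hx : hN r σ0 n x ≤ 1 <;> simp [Set.indicator, hx, sq]
  · have := key (fun x => if x ≤ 1 then 0 else x⁻¹) 0
      (Measurable.ite measurableSet_Iic measurable_const measurable_inv)
      (fun x hx => by
        split_ifs with h
        · simp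
        · rw [abs_of_nonneg (by positivity)]
          exact inv_le_one_of_one_le₀ (not_le.1 h).le)
      (tendsto_const_nhds.congr' (hev0.mono fun x hx => by simp [hx]))
      (tendsto_inv_atTop_zero.congr' ((eventually_gt_atTop 1).mono fun x hx => by simp [not_le.2 hx]))
    rw [mul_zero] at this
    refine this.congr' ?_
    filter_upwards [eventually_gt_atTop 0] with n hn
    congr 1
    have hms : MeasurableSet {x | 1 < hN r σ0 n x} :=
      measurableSet_lt measurable_const (hN_measurable r σ0 n)
    rw [← integral_indicator_one hms]
    congr 1
    ext x
    by_cases hx : hN r σ0 n x ≤ 1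
    · simp [Set.indicator, hx, not_lt.2 hx]
    · simp [Set.indicator, hx, not_le.1 hx, (hN_pos r σ0 hσ0 n hn x).ne']

/-- The likelihood ratio of the product measures. -/
def RN (r σ0 : ℝ) (n : ℕ) (y : Fin n → ℝ) : ℝ := ∏ i, (1 - (n : ℝ)⁻¹ + hN r σ0 n (y i))

theorem qN_nonneg (r σ0 : ℝ) (n : ℕ) (x : ℝ) : 0 ≤ 1 - (n : ℝ)⁻¹ + hN r σ0 n x := by
  have h2 : (n:ℝ)⁻¹ ≤ 1 := Nat.cast_inv_le_one n
  have := hN_nonneg r σ0 n x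
  linarith

theorem RN_nonneg (r σ0 : ℝ) (n : ℕ) (y : Fin n → ℝ) : 0 ≤ RN r σ0 n y :=
  Finset.prod_nonneg fun i _ => qN_nonneg _ _ _ _

theorem RN_measurable (r σ0 : ℝ) (n : ℕ) : Measurable (RN r σ0 n) :=
  Finset.measurable_prod _ fun i _ =>
    ((hN_measurable r σ0 n).comp (measurable_pi_apply i)).const_add _

instance PprodN_prob (n : ℕ) : IsProbabilityMeasure (PprodN n) := by
  unfold PprodN; infer_instance

instance QprodN_prob (r σ0 : ℝ) (n : ℕ) : IsProbabilityMeasure (QprodN r σ0 n) := by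
  unfold QprodN; infer_instance

theorem QprodN_eq (r σ0 : ℝ) (hσ0 : 0 < σ0) (n : ℕ) :
    QprodN r σ0 n = (PprodN n).withDensity (fun y => ENNReal.ofReal (RN r σ0 n y)) := by
  have hQ := QoneN_eq_withDensity r σ0 hσ0 n
  have : IsProbabilityMeasure ((gaussianReal 0 1).withDensity
      (fun x => ENNReal.ofReal (1 - (n:ℝ)⁻¹ + hN r σ0 n x))) := hQ ▸ QoneN_prob r σ0 n
  unfold QprodN PprodN
  rw [hQ, ← pi_withDensity_aux _ _ ((hN_measurable r σ0 n).const_add _).ennreal_ofReal]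
  congr 1
  ext y
  rw [RN, ENNReal.ofReal_prod_of_nonneg fun i _ => qN_nonneg _ _ _ _]

theorem RN_integral (r σ0 : ℝ) (hσ0 : 0 < σ0) (n : ℕ) :
    Integrable (RN r σ0 n) (PprodN n) ∧ ∫ y, RN r σ0 n y ∂(PprodN n) = 1 := by
  have h1 : ∫⁻ y, ENNReal.ofReal (RN r σ0 n y) ∂(PprodN n) = 1 := by
    have := measure_univ (μ := QprodN r σ0 n)
    rwa [QprodN_eq r σ0 hσ0 n, withDensity_apply _ MeasurableSet.univ, setLIntegral_univ] at this
  constructor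
  · refine ⟨(RN_measurable r σ0 n).aestronglyMeasurable, ?_⟩
    rw [hasFiniteIntegral_iff_ofReal (ae_of_all _ (RN_nonneg r σ0 n)), h1]
    exact ENNReal.one_lt_top
  · rw [integral_eq_lintegral_of_nonneg_ae (ae_of_all _ (RN_nonneg r σ0 n))
      (RN_measurable r σ0 n).aestronglyMeasurable, h1]
    rfl

theorem log_finset_prod {ι : Type*} (s : Finset ι) (g : ι → ENNReal) :
    ∑ i ∈ s, ENNReal.log (g i) = ENNReal.log (∏ i ∈ s, g i) := by
  classical
  induction s using Finset.induction_on with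
  | empty => simp
  | insert a s ha ih => rw [Finset.sum_insert ha, Finset.prod_insert ha, ENNReal.log_mul_add, ih]

theorem elr_ae (r σ0 : ℝ) (hσ0 : 0 < σ0) (n : ℕ) :
    ∀ᵐ x ∂(gaussianReal 0 1), elr (QoneN r σ0 n) (gaussianReal 0 1) x =
      ENNReal.ofReal (1 - (n:ℝ)⁻¹ + hN r σ0 n x) := by
  have h1 := Measure.rnDeriv_eq_div_rnDeriv_add (QoneN r σ0 n) (gaussianReal 0 1)
  have h2 := Measure.rnDeriv_withDensity (gaussianReal 0 1)
    ((hN_measurable r σ0 n).const_add (1 - (n:ℝ)⁻¹)).ennreal_ofReal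
  rw [← QoneN_eq_withDensity r σ0 hσ0 n] at h2
  filter_upwards [h1, h2] with x h1 h2
  rw [elr, add_comm, ← h1, h2]

theorem TstatN_ae (r σ0 : ℝ) (hσ0 : 0 < σ0) (n : ℕ) :
    ∀ᵐ y ∂(PprodN n), TstatN r σ0 n y = ENNReal.log (ENNReal.ofReal (RN r σ0 n y)) := by
  have h : ∀ i : Fin n, ∀ᵐ y ∂(PprodN n), elr (QoneN r σ0 n) (gaussianReal 0 1) (y i) =
      ENNReal.ofReal (1 - (n:ℝ)⁻¹ + hN r σ0 n (y i)) := fun i =>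
    (Measure.quasiMeasurePreserving_eval (fun _ : Fin n => gaussianReal 0 1) i).ae
      (elr_ae r σ0 hσ0 n)
  filter_upwards [ae_all_iff.2 h] with y hy
  rw [TstatN, log_finset_prod, RN, ENNReal.ofReal_prod_of_nonneg fun i _ => qN_nonneg _ _ _ _]
  congr 1
  exact Finset.prod_congr rfl fun i _ => hy i

theorem TstatN_measurable (r σ0 : ℝ) (n : ℕ) : Measurable (TstatN r σ0 n) := by
  unfold TstatN
  refine Finset.measurable_sum _ fun i _ => ?_
  refine ENNReal.measurable_log.comp ?_
  unfold elr
  exact ((Measure.measurable_rnDeriv _ _).div (Measure.measurable_rnDeriv _ _)).comp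
    (measurable_pi_apply i)

theorem weak_of_LR (r σ0 p : ℝ) (hσ0 : 0 < σ0)
    (hc : ∀ δ > 0, Tendsto (fun n : ℕ => (PprodN n).real
      {y | δ ≤ |RN r σ0 n y - Real.exp (-p)|}) atTop (𝓝 0)) (hp : 0 ≤ p) :
    WeakLim (fun n => (PprodN n).map (TstatN r σ0 n)) (Measure.dirac ((-p : ℝ) : EReal)) ∧
    WeakLim (fun n => (QprodN r σ0 n).map (TstatN r σ0 n))
        ((ENNReal.ofReal (Real.exp (-p))) • Measure.dirac ((-p : ℝ) : EReal) +
          (ENNReal.ofReal (1 - Real.exp (-p))) • Measure.dirac (⊤ : EReal)) := by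
  have main := fun (G : ℝ → ℝ) => tendsto_integral_sublinear (fun n => PprodN n)
    (fun n => RN r σ0 n) (Eventually.of_forall (RN_nonneg r σ0)) (RN_measurable r σ0)
    (Eventually.of_forall (RN_integral r σ0 hσ0)) (Real.exp (-p)) hc G
  have hFc : ∀ f : BoundedContinuousFunction EReal ℝ,
      Continuous (fun x : ℝ => f (ENNReal.log (ENNReal.ofReal x))) := fun f =>
    f.continuous.comp (ENNReal.continuous_log.comp ENNReal.continuous_ofReal)
  have hFp : ENNReal.log (ENNReal.ofReal (Real.exp (-p))) = ((-p : ℝ) : EReal) := by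
    rw [ENNReal.log_ofReal_of_pos (Real.exp_pos _), Real.log_exp]
  constructor
  · intro f
    have h1 := main (fun x => f (ENNReal.log (ENNReal.ofReal x))) (hFc f).measurable
      (hFc f).continuousAt (fun ε hε => ⟨‖f‖, fun x hx => by
        have := f.norm_coe_le_norm (ENNReal.log (ENNReal.ofReal x))
        rw [Real.norm_eq_abs] at this
        have := mul_nonneg hε.le hx
        linarith⟩)
    simp only [hFp] at h1
    rw [integral_dirac]
    refine h1.congr fun n => ?_
    rw [integral_map (TstatN_measurable r σ0 n).aemeasurable f.continuous.aestronglyMeasurable]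
    refine integral_congr_ae ?_
    filter_upwards [TstatN_ae r σ0 hσ0 n] with y hy
    rw [hy]
  · intro f
    have hlim : Tendsto (fun x : ℝ => f (ENNReal.log (ENNReal.ofReal x))) atTop (𝓝 (f ⊤)) := by
      have := (f.continuous.comp ENNReal.continuous_log).tendsto ⊤
      simp only [Function.comp, ENNReal.log_top] at this
      exact this.comp ENNReal.tendsto_ofReal_atTop
    have h1 := main (fun x => (f (ENNReal.log (ENNReal.ofReal x)) - f ⊤) * x)
      (((hFc f).sub continuous_const).mul continuous_id).measurable
      (((hFc f).sub continuous_const).mul continuous_id).continuousAt (fun ε hε => by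
        obtain ⟨K, hK⟩ := eventually_atTop.1 (Metric.tendsto_nhds.1 hlim ε hε)
        refine ⟨2 * ‖f‖ * |K|, fun x hx => ?_⟩
        rw [abs_mul, abs_of_nonneg hx]
        have hf0 := norm_nonneg f
        rcases le_total K x with h | h
        · have h3 := hK x h
          rw [Real.dist_eq] at h3
          have h4 := mul_le_mul_of_nonneg_right h3.le hx
          have : 0 ≤ 2 * ‖f‖ * |K| := by positivity
          linarith
        · have h3 := f.dist_le_two_norm (ENNReal.log (ENNReal.ofReal x)) ⊤
          rw [Real.dist_eq] at h3
          have h4 : x ≤ |K| := h.trans (le_abs_self K)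
          have h5 := mul_le_mul h3 h4 hx (by positivity)
          have := mul_nonneg hε.le hx
          linarith)
    simp only [hFp] at h1
    have hrhs : ∫ x, f x ∂((ENNReal.ofReal (Real.exp (-p))) • Measure.dirac ((-p : ℝ) : EReal) +
          (ENNReal.ofReal (1 - Real.exp (-p))) • Measure.dirac (⊤ : EReal)) =
        (f ((-p : ℝ) : EReal) - f ⊤) * Real.exp (-p) + f ⊤ := by
      have hle : Real.exp (-p) ≤ 1 := Real.exp_le_one_iff.2 (by linarith)
      have hi : ∀ a : EReal, Integrable f (Measure.dirac a) := fun a => f.integrable _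
      rw [integral_add_measure ((hi _).smul_measure ENNReal.ofReal_ne_top)
        ((hi _).smul_measure ENNReal.ofReal_ne_top), integral_smul_measure, integral_smul_measure,
        integral_dirac, integral_dirac, ENNReal.toReal_ofReal (Real.exp_pos _).le,
        ENNReal.toReal_ofReal (by linarith), smul_eq_mul, smul_eq_mul]
      ring
    rw [hrhs]
    refine (h1.add_const (f ⊤)).congr fun n => ?_
    rw [integral_map (TstatN_measurable r σ0 n).aemeasurable f.continuous.aestronglyMeasurable,
      QprodN_eq r σ0 hσ0 n, integral_withDensity_eq_integral_toReal_smul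
        (RN_measurable r σ0 n).ennreal_ofReal (ae_of_all _ fun _ => ENNReal.ofReal_lt_top)]
    obtain ⟨hRi, hR1⟩ := RN_integral r σ0 hσ0 n
    have hFi : Integrable (fun y => (f (ENNReal.log (ENNReal.ofReal (RN r σ0 n y))) - f ⊤)
        * RN r σ0 n y) (PprodN n) := by
      refine hRi.bdd_mul (c := 2 * ‖f‖)
        ((((hFc f).sub continuous_const).measurable.comp (RN_measurable r σ0 n)).aestronglyMeasurable)
        (ae_of_all _ fun y => ?_)
      exact f.dist_le_two_norm _ _
    have e1 : f ⊤ = ∫ y, f ⊤ * RN r σ0 n y ∂(PprodN n) := by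
      rw [integral_const_mul, hR1, mul_one]
    conv_lhs => rw [e1]
    rw [← integral_add (by rw [← e1]; exact hFi) (hRi.const_mul _)]
    refine integral_congr_ae ?_
    filter_upwards [TstatN_ae r σ0 hσ0 n] with y hy
    rw [hy, ENNReal.toReal_ofReal (RN_nonneg _ _ _ _), smul_eq_mul, ← e1]
    ring

theorem tv_of_LR (r σ0 : ℝ) (hσ0 : 0 < σ0)
    (hc : ∀ δ > 0, Tendsto (fun n : ℕ => (PprodN n).real
      {y | δ ≤ |RN r σ0 n y - 1|}) atTop (𝓝 0)) :
    Tendsto (fun n => tvDist (PprodN n) (QprodN r σ0 n)) atTop (𝓝 0) := by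
  have h1 := tendsto_integral_sublinear (fun n => PprodN n)
    (fun n => RN r σ0 n) (Eventually.of_forall (RN_nonneg r σ0)) (RN_measurable r σ0)
    (Eventually.of_forall (RN_integral r σ0 hσ0)) 1 hc (fun x => min x 1)
    (measurable_id.min measurable_const) (continuous_id.min continuous_const).continuousAt
    (fun ε hε => ⟨1, fun x hx => by
      rw [abs_of_nonneg (le_min hx zero_le_one)]
      have := mul_nonneg hε.le hx
      have := min_le_right x 1
      linarith⟩)
  have h2 := (h1.const_mul 2).const_sub 2
  simp only [min_self, mul_one, sub_self] at h2
  refine squeeze_zero (fun n => Real.iSup_nonneg fun A => abs_nonneg _) (fun n => ?_) h2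
  obtain ⟨hRi, hR1⟩ := RN_integral r σ0 hσ0 n
  have hmi : Integrable (fun y => min (RN r σ0 n y) 1) (PprodN n) := hRi.inf (integrable_const 1)
  have hsi : Integrable (fun y => 1 - RN r σ0 n y) (PprodN n) := (integrable_const 1).sub hRi
  have habs : ∫ y, |1 - RN r σ0 n y| ∂(PprodN n) = 2 - 2 * ∫ y, min (RN r σ0 n y) 1 ∂(PprodN n) := by
    have : ∀ y, |1 - RN r σ0 n y| = (1 + RN r σ0 n y) - 2 * min (RN r σ0 n y) 1 := by
      intro y
      rcases le_total (RN r σ0 n y) 1 with h | h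
      · rw [abs_of_nonneg (by linarith), min_eq_left h]; ring
      · rw [abs_of_nonpos (by linarith), min_eq_right h]; ring
    simp_rw [this]
    rw [integral_sub ((integrable_const _).fun_add hRi) (hmi.const_mul _),
      integral_add (integrable_const _) hRi, hR1, integral_const_mul]
    simp
    norm_num
  rw [← habs]
  have hnn : 0 ≤ ∫ y, |1 - RN r σ0 n y| ∂(PprodN n) := integral_nonneg fun y => abs_nonneg _
  refine Real.iSup_le (fun A => ?_) hnn
  have hQA : ((QprodN r σ0 n) A.1).toReal = ∫ y in A.1, RN r σ0 n y ∂(PprodN n) := by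
    rw [QprodN_eq r σ0 hσ0 n, withDensity_apply _ A.2,
      integral_eq_lintegral_of_nonneg_ae (ae_of_all _ (RN_nonneg r σ0 n))
      (RN_measurable r σ0 n).aestronglyMeasurable]
  have hPA : ((PprodN n) A.1).toReal = ∫ y in A.1, (1:ℝ) ∂(PprodN n) := by
    simp [measureReal_def]
  rw [hQA, hPA, ← integral_sub (integrable_const _) hRi.integrableOn]
  exact abs_integral_le_integral_abs.trans
    (setIntegral_le_integral hsi.abs (ae_of_all _ fun y => abs_nonneg _))

theorem gaussian_half : (gaussianReal 0 1).real (Set.Iio 0) = 1 - 1 / 2 := by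
  have hna : NullSingletonClass (gaussianReal 0 1) := nullSingletonClass_gaussianReal one_ne_zero
  have h1 : (gaussianReal 0 1).real (Set.Iio 0) = (gaussianReal 0 1).real (Set.Ioi 0) := by
    have := gaussianReal_map_neg (μ := 0) (v := 1)
    rw [neg_zero] at this
    conv_lhs => rw [← this]
    rw [measureReal_def, Measure.map_apply (by fun_prop) measurableSet_Iio, measureReal_def]
    congr 2
    ext x; simp
  have h2 : (gaussianReal 0 1).real (Set.Ici 0) = (gaussianReal 0 1).real (Set.Ioi 0) := by
    simp only [measureReal_def]
    rw [measure_congr Ioi_ae_eq_Ici]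
  have h3 := probReal_compl_eq_one_sub (μ := gaussianReal 0 1) (s := Set.Iio (0:ℝ)) measurableSet_Iio
  rw [Set.compl_Iio, h2, ← h1] at h3
  linarith

/-- heteroscedastic normal mixture, extension of the detection
boundary to `β = 1`, i.e. `ε_n = n⁻¹`. -/
theorem statement16 (r σ0 : ℝ) (hσ0 : 0 < σ0) (hrpos : 0 < r) :
    -- (i) r < 1: undetectable
    (r < 1 →
      Tendsto (fun n => tvDist (PprodN n) (QprodN r σ0 n)) atTop (nhds 0)) ∧
    -- (ii) r = 1
    (r = 1 →
      WeakLim (fun n => (PprodN n).map (TstatN r σ0 n))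
        (Measure.dirac ((-(1 / 2) : ℝ) : EReal)) ∧
      WeakLim (fun n => (QprodN r σ0 n).map (TstatN r σ0 n))
        ((ENNReal.ofReal (Real.exp (-(1 / 2)))) • Measure.dirac ((-(1 / 2) : ℝ) : EReal) +
          (ENNReal.ofReal (1 - Real.exp (-(1 / 2)))) • Measure.dirac (⊤ : EReal))) ∧
    -- (iii) r > 1
    (1 < r →
      WeakLim (fun n => (PprodN n).map (TstatN r σ0 n))
        (Measure.dirac ((-1 : ℝ) : EReal)) ∧
      WeakLim (fun n => (QprodN r σ0 n).map (TstatN r σ0 n))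
        ((ENNReal.ofReal (Real.exp (-1))) • Measure.dirac ((-1 : ℝ) : EReal) +
          (ENNReal.ofReal (1 - Real.exp (-1))) • Measure.dirac (⊤ : EReal))) := by
  have hex : ∀ z : ℝ, (fun n : ℕ => hN r σ0 n (thetaN r n + σ0 * z)) =ᶠ[atTop]
      fun n : ℕ => Real.exp ((r - 1) * √(Real.log n) ^ 2 +
      √(2 * r) * σ0 * z * √(Real.log n) + ((σ0 ^ 2 - 1) * z ^ 2 / 2 - Real.log σ0)) := by
    intro z
    filter_upwards [eventually_gt_atTop 0] with n hn
    exact hN_exp r σ0 hrpos hσ0 n hn z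
  have hneg0 : ∀ (u : ℕ → ℝ), Tendsto (fun n => - u n) atTop atTop →
      Tendsto (fun n => Real.exp (u n)) atTop (𝓝 0) := fun u hu =>
    Real.tendsto_exp_atBot.comp (tendsto_neg_atTop_iff.1 hu)
  refine ⟨fun hr => ?_, fun hr => ?_, fun hr => ?_⟩
  · refine tv_of_LR r σ0 hσ0 fun δ hδ => ?_
    have := LR_tendsto r σ0 0 hσ0 Set.univ MeasurableSet.univ (by simp)
      (ae_of_all _ fun z _ => (hneg0 _ ((quad_top (1 - r) (-(√(2 * r) * σ0 * z))
        (-((σ0 ^ 2 - 1) * z ^ 2 / 2 - Real.log σ0)) (by linarith)).congr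
          fun n => by ring)).congr' (hex z).symm)
      (ae_of_all _ fun z hz => absurd (Set.mem_univ z) hz) δ hδ
    simpa [RN] using this
  · subst hr
    refine weak_of_LR 1 σ0 (1 / 2) hσ0 (fun δ hδ => ?_) (by norm_num)
    have hna : NullSingletonClass (gaussianReal 0 1) := nullSingletonClass_gaussianReal one_ne_zero
    have h2 : 0 < √(2 * 1) * σ0 := by positivity
    refine LR_tendsto 1 σ0 (1 / 2) hσ0 (Set.Iio 0) measurableSet_Iio gaussian_half
      (ae_of_all _ fun z hz => ?_) ?_ δ hδ
    · have hz' : 0 < √(2 * 1) * σ0 * (-z) := mul_pos h2 (neg_pos.2 hz)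
      exact (hneg0 _ ((lin_top _ (-((σ0 ^ 2 - 1) * z ^ 2 / 2 - Real.log σ0)) hz').congr
        fun n => by ring)).congr' (hex z).symm
    · have hne : ∀ᵐ z ∂(gaussianReal 0 1), z ≠ 0 := by
        rw [ae_iff]; simp
      filter_upwards [hne] with z hz0 hz
      have hz1 : 0 < z := lt_of_le_of_ne (not_lt.1 hz) hz0.symm
      have hz' : 0 < √(2 * 1) * σ0 * z := mul_pos h2 hz1
      exact (Real.tendsto_exp_atTop.comp ((lin_top _ ((σ0 ^ 2 - 1) * z ^ 2 / 2 - Real.log σ0) hz').congr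
        fun n => by ring)).congr' (hex z).symm
  · refine weak_of_LR r σ0 1 hσ0 (fun δ hδ => ?_) (by norm_num)
    exact LR_tendsto r σ0 1 hσ0 ∅ MeasurableSet.empty (by simp)
      (ae_of_all _ fun z hz => absurd hz (Set.notMem_empty z))
      (ae_of_all _ fun z _ => (Real.tendsto_exp_atTop.comp
        (quad_top (r - 1) (√(2 * r) * σ0 * z) _ (by linarith))).congr' (hex z).symm) δ hδ

end
end
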